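/- Let d₀ ≥ 2, M = 𝕋^{d₀} = ℝ^{d₀}/ℤ^{d₀} with normalized Haar measure ν and quotient metric d, and let T be the algebraic automorphism of 𝕋^{d₀} induced by S ∈ SL_{d₀}(ℤ) none of whose eigenvalues is a root of unity. Let η > 0 and let f : M → ℝ be bounded, η-Hölder continuous, with ∫_M f dν = 0. Then ξ_k := f∘T^k (k ∈ ℤ, on the probability space (M, ν)) satisfies: (3) (ξ_k) is stationary, centered, with finite fourth moments; (4) Σ_{p≥0} √(1+p) |∫ f·(f∘T^p) dν| < ∞ and sup_{N≥1} N^{−2} Σ_{k₁,k₂,k₃,k₄=0}^{N−1} |∫ Π_{j=1}^4 f∘T^{k_j} dν| < ∞; (5) there exist C > 0, nonnegative reals (φ_{p,s})_{p,s∈ℕ} and an integer r ≥ 1 with φ_{p+1,s} ≤ φ_{p,s}, lim_{s→∞} √s φ_{rs,s} = 0, and for all 0 ≤ n₁ ≤ n₂ ≤ n₃ ≤ n₄ and all reals α_{n₁},...,α_{n₂}, β_{n₃},...,β_{n₄}: |Cov_ν(exp(i Σ_{k=n₁}^{n₂} α_k f∘T^k), exp(i Σ_{k=n₃}^{n₄}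 β_k f∘T^k))| ≤ C(1 + Σ|α_k| + Σ|β_k|) φ_{n₃−n₂, n₄−n₃}. -/

import Mathlib

open MeasureTheory ProbabilityTheory Filter

noncomputable section

/-- Number of visits of the walk `S` to site `k` among times `1,...,n` (local time). -/
def localTime {Ω : Type*} (S : ℕ → Ω → ℤ) (n : ℕ) (k : ℤ) (ω : Ω) : ℝ :=
  ((Finset.Icc 1 n).filter (fun j => S j ω = k)).card

/-- `S` is a simple symmetric random walk on `ℤ`: `S 0 = 0` and the increments are
i.i.d. uniform on `{-1, 1}`. -/
structure IsSSRW {Ω : Type*} [MeasurableSpace Ω] (μ : Measure Ω) (S : ℕ → Ω → ℤ) : Prop where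
  meas : ∀ n, Measurable (S n)
  init : ∀ ω, S 0 ω = 0
  indep : iIndepFun (fun n ω => S (n + 1) ω - S n ω) μ
  step_one : ∀ n, μ {ω | S (n + 1) ω - S n ω = 1} = 1 / 2
  step_neg_one : ∀ n, μ {ω | S (n + 1) ω - S n ω = -1} = 1 / 2

/-- Stationarity of the sequence `(ξ k)_{k ∈ ℤ}`: all finite dimensional distributions
are invariant under a shift of the index. -/
def IsStationarySeq {Ω : Type*} [MeasurableSpace Ω] (μ : Measure Ω) (ξ : ℤ → Ω → ℝ) : Prop :=
  ∀ (j : ℤ) (q : ℕ) (k : Fin q → ℤ),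
    Measure.map (fun ω i => ξ (k i + j) ω) μ = Measure.map (fun ω i => ξ (k i) ω) μ

/-- Covariance of two complex-valued random variables. -/
def covC {Ω : Type*} [MeasurableSpace Ω] (μ : Measure Ω) (U V : Ω → ℂ) : ℂ :=
  ∫ ω, U ω * V ω ∂μ - (∫ ω, U ω ∂μ) * (∫ ω, V ω ∂μ)

/-- Condition (3): `(ξ k)` is stationary, centered, with finite fourth moments. -/
def Cond3 {Ω : Type*} [MeasurableSpace Ω] (μ : Measure Ω) (ξ : ℤ → Ω → ℝ) : Prop :=
  IsStationarySeq μ ξ ∧ (∀ k, ∫ ω, ξ k ω ∂μ = 0) ∧ ∀ k, Integrable (fun ω => (ξ k ω) ^ 4) μ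

/-- Condition (4). -/
def Cond4 {Ω : Type*} [MeasurableSpace Ω] (μ : Measure Ω) (ξ : ℤ → Ω → ℝ) : Prop :=
  Summable (fun p : ℕ => Real.sqrt (1 + (p : ℝ)) * |∫ ω, ξ 0 ω * ξ (p : ℤ) ω ∂μ|) ∧
  ∃ B : ℝ, ∀ N : ℕ, 1 ≤ N →
    ∑ k₁ ∈ Finset.range N, ∑ k₂ ∈ Finset.range N, ∑ k₃ ∈ Finset.range N,
      ∑ k₄ ∈ Finset.range N,
        |∫ ω, ξ (k₁ : ℤ) ω * ξ (k₂ : ℤ) ω * ξ (k₃ : ℤ) ω * ξ (k₄ : ℤ) ω ∂μ| ≤ B * (N : ℝ) ^ 2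

/-- The covariance inequality of condition (5), for a given constant `C` and
family `φ`. -/
def Cond5Bound {Ω : Type*} [MeasurableSpace Ω] (μ : Measure Ω) (ξ : ℤ → Ω → ℝ)
    (C : ℝ) (φ : ℕ → ℕ → ℝ) : Prop :=
  ∀ n₁ n₂ n₃ n₄ : ℕ, n₁ ≤ n₂ → n₂ ≤ n₃ → n₃ ≤ n₄ → ∀ α β : ℕ → ℝ,
    ‖covC μ
        (fun ω => Complex.exp (Complex.I * ((∑ k ∈ Finset.Icc n₁ n₂, α k * ξ (k : ℤ) ω : ℝ) : ℂ)))
        (fun ω => Complex.exp (Complex.I * ((∑ k ∈ Finset.Icc n₃ n₄, β k * ξ (k : ℤ) ω : ℝ) : ℂ)))‖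
      ≤ C * (1 + ∑ k ∈ Finset.Icc n₁ n₂, |α k| + ∑ k ∈ Finset.Icc n₃ n₄, |β k|) *
          φ (n₃ - n₂) (n₄ - n₃)

/-- Condition (5). -/
def Cond5 {Ω : Type*} [MeasurableSpace Ω] (μ : Measure Ω) (ξ : ℤ → Ω → ℝ) : Prop :=
  ∃ C : ℝ, 0 < C ∧ ∃ (φ : ℕ → ℕ → ℝ) (r : ℕ), 1 ≤ r ∧
    (∀ p s, 0 ≤ φ p s) ∧ (∀ p s, φ (p + 1) s ≤ φ p s) ∧
    Tendsto (fun s : ℕ => Real.sqrt s * φ (r * s) s) atTop (nhds 0) ∧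
    Cond5Bound μ ξ C φ

/-- The iterate `T^k` for `k ∈ ℤ` of an invertible transformation `T`
with inverse `Tinv`. -/
def Titer {M : Type*} (T Tinv : M → M) : ℤ → M → M
  | Int.ofNat n => T^[n]
  | Int.negSucc n => Tinv^[n + 1]

open scoped ENNReal
/-- The `d`-dimensional torus `ℝ^d/ℤ^d`, realised as `(ℝ/ℤ)^d`; it carries the product
(normalised Haar) measure `volume`. -/
abbrev Torus (d : ℕ) : Type := Fin d → AddCircle (1 : ℝ)

/-- The quotient metric on the torus induced by the Euclidean metric on `ℝ^d`
(here `‖·‖` is the quotient norm on `ℝ/ℤ`). -/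
def torusDist {d : ℕ} (x y : Torus d) : ℝ := Real.sqrt (∑ i, ‖x i - y i‖ ^ 2)

/-- The algebraic endomorphism of the torus induced by an integer matrix `S`. -/
def torusAut {d : ℕ} (S : Matrix (Fin d) (Fin d) ℤ) (x : Torus d) : Torus d :=
  fun i => ∑ j, S i j • x j

/-- `S` has no eigenvalue which is a root of unity. -/
def NoRootOfUnityEigenvalue {d : ℕ} (S : Matrix (Fin d) (Fin d) ℤ) : Prop :=
  ∀ z : ℂ, (Matrix.charpoly (S.map (fun a => (a : ℂ)))).IsRoot z →
    ∀ n : ℕ, n ≠ 0 → z ^ n ≠ 1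

/-- The η-Hölder constant `C_g^{(η)}` of `g` (with value `∞` if `g` is not η-Hölder),
for the Euclidean quotient metric on the torus. -/
def holderC {d : ℕ} (η : ℝ) (g : Torus d → ℂ) : ℝ≥0∞ :=
  ⨆ (x : Torus d) (y : Torus d) (_ : x ≠ y),
    ENNReal.ofReal (‖g x - g y‖ / torusDist x y ^ η)

/-- A real function on the torus is η-Hölder continuous (for the Euclidean quotient
metric). -/
def IsHolder {d : ℕ} (η : ℝ) (f : Torus d → ℝ) : Prop :=
  ∃ c : ℝ, ∀ x y : Torus d, |f x - f y| ≤ c * torusDist x y ^ η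

/-!
Let `n` be a nonzero integer vector and `e_n` the character of the torus with frequency `n`. By
Kronecker's theorem every eigenvalue of `S`, being an algebraic integer but not a root of unity, has
a conjugate outside the unit circle. Hence some real vector `w` with `n ⬝ w = 1 / 2` is contracted
exponentially by the powers of `S⁻¹`; a Liouville estimate (the norm of a nonzero algebraic integer
is at least `1`) makes the constant polynomial in `‖n‖`.

Translation by `S⁻ᵖ w` changes the sign of `e_n ∘ Tᵖ` but hardly changes a Hölder function `F` of
the past, so `∫ F * (e_n ∘ Tᵖ)` is exponentially small in `p`. Replacing `G` by its Fejér mean of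
degree exponential in `p`, with a small exponent, absorbs the polynomial loss in `‖n‖` and gives
exponential decay of the covariance of `F` and `G ∘ Tᵖ`.

For four ordered times, this decay across the last gap, and for `T⁻¹` across the first gap, bounds
the fourth moment by a product over the pairing of neighbours, whose sum over all times is `O(N²)`.
For the characteristic functions, a block of length `s` of the future is Hölder with a constant
`O(Λˢ)`, where `Λ` is a Lipschitz constant of `T`, so that `φ p s = Λ ^ s * ρ ^ p` is admissible,
and `r` is chosen with `Λ * ρ ^ r < 1`.
-/

lemma exists_le_mul_pow_of_le_mul_add {a : ℕ → ℝ} {q r C : ℝ} (hq : 0 ≤ q) (hqr : q < r)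
    (ha : ∀ j, a (j + 1) ≤ q * a j + C * r ^ (j + 1)) : ∃ D, ∀ j, a j ≤ D * r ^ j := by
  let D := max (a 0) (C * r / (r - q))
  have hD : C * r ≤ D * (r - q) := (div_le_iff₀ (sub_pos.2 hqr)).1 (le_max_right _ _)
  refine ⟨D, fun j => ?_⟩
  induction j with
  | zero => simp [D]
  | succ j ih =>
    have hr : 0 ≤ r ^ j := pow_nonneg (hq.trans hqr.le) j
    calc a (j + 1) ≤ q * (D * r ^ j) + C * r ^ (j + 1) := (ha j).trans (by gcongr)
      _ = (q * D + C * r) * r ^ j := by ring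
      _ ≤ (D * r) * r ^ j := by gcongr; linarith
      _ = D * r ^ (j + 1) := by ring

lemma exists_norm_pow_apply_le_of_mem_maxGenEigenspace {𝕜 E : Type*} [NormedField 𝕜]
    [NormedAddCommGroup E] [NormedSpace 𝕜 E] {A B : Module.End 𝕜 E} (hBA : B * A = 1) {z : 𝕜}
    {r : ℝ} (hz : z ≠ 0) (hr : ‖z‖⁻¹ < r) {u : E} (hu : u ∈ A.maxGenEigenspace z) :
    ∃ C : ℝ, ∀ j : ℕ, ‖(B ^ j) u‖ ≤ C * r ^ j := by
  obtain ⟨m, hm⟩ := (Module.End.mem_maxGenEigenspace A z u).1 hu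
  clear hu
  induction m generalizing u with
  | zero =>
    obtain rfl : u = 0 := by simpa using hm
    exact ⟨0, by simp⟩
  | succ m ih =>
    set u' := (A - z • 1) u
    obtain ⟨C, hC⟩ := ih (u := u') (by rwa [← Module.End.mul_apply, ← pow_succ])
    have hrec (j : ℕ) : (B ^ (j + 1)) u = z⁻¹ • ((B ^ j) u - (B ^ (j + 1)) u') := by
      have hBu : (B ^ (j + 1)) (A u) = (B ^ j) u := by
        rw [← Module.End.mul_apply, pow_succ, mul_assoc, hBA, mul_one]
      simp [u', hBu, inv_smul_smul₀ hz]
    refine exists_le_mul_pow_of_le_mul_add (q := ‖z‖⁻¹) (C := ‖z‖⁻¹ * C) (by positivity) hr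
      fun j => ?_
    calc ‖(B ^ (j + 1)) u‖ = ‖z‖⁻¹ * ‖(B ^ j) u - (B ^ (j + 1)) u'‖ := by
          rw [hrec, norm_smul, norm_inv]
      _ ≤ ‖z‖⁻¹ * (‖(B ^ j) u‖ + C * r ^ (j + 1)) := by
          gcongr
          exact (norm_sub_le _ _).trans (by gcongr; exact hC _)
      _ = _ := by ring

lemma iSup_maxGenEigenspace_eq_top_of_splits {K V : Type*} [Field K] [AddCommGroup V] [Module K V]
    [FiniteDimensional K V] {f : Module.End K V} (hf : f.charpoly.Splits) :
    ⨆ (c : K) (_ : f.charpoly.IsRoot c), f.maxGenEigenspace c = ⊤ := by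
  classical
  have hker (s : Finset K) (m : K → ℕ) :
      LinearMap.ker (Polynomial.aeval f (∏ c ∈ s, (Polynomial.X - Polynomial.C c) ^ m c)) ≤
        ⨆ c ∈ s, f.maxGenEigenspace c := by
    induction s using Finset.induction_on with
    | empty => simp [Module.End.one_eq_id]
    | insert c s hc ih =>
      have hcop : IsCoprime ((Polynomial.X - Polynomial.C c) ^ m c)
          (∏ b ∈ s, (Polynomial.X - Polynomial.C b) ^ m b) :=
        IsCoprime.prod_right fun b hb => (Polynomial.isCoprime_X_sub_C_of_isUnit_sub
          (sub_ne_zero.2 (ne_of_mem_of_not_mem hb hc).symm).isUnit).pow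
      rw [Finset.prod_insert hc, ← Polynomial.sup_ker_aeval_eq_ker_aeval_mul_of_coprime f hcop,
        Finset.iSup_insert]
      refine sup_le_sup (fun v hv => (Module.End.mem_maxGenEigenspace f c v).2 ⟨m c, ?_⟩) ih
      simpa [Algebra.algebraMap_eq_smul_one] using hv
  have hprod := hf.eq_prod_roots_of_monic f.charpoly_monic
  rw [Finset.prod_multiset_map_count] at hprod
  have htop := hker f.charpoly.roots.toFinset fun c => f.charpoly.roots.count c
  rw [← hprod, LinearMap.aeval_self_charpoly, LinearMap.ker_zero, top_le_iff] at htop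
  simpa [f.charpoly_monic.ne_zero] using htop

lemma one_le_norm_embedding_mul_pow {K : Type*} [Field K] [NumberField K] {y : K} (hy : y ≠ 0)
    (h_int : IsIntegral ℤ y) {B : ℝ} (hB : ∀ σ : K →ₐ[ℚ] ℂ, ‖σ y‖ ≤ B) (σ₀ : K →ₐ[ℚ] ℂ) :
    1 ≤ ‖σ₀ y‖ * B ^ (Fintype.card (K →ₐ[ℚ] ℂ) - 1) := by
  classical
  obtain ⟨k, hk⟩ := IsIntegrallyClosed.isIntegral_iff.1 (Algebra.isIntegral_norm ℚ h_int)
  have hk0 : k ≠ 0 := by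
    rintro rfl
    exact hy ((Algebra.norm_eq_zero_iff (R := ℚ)).1 (by rw [← hk, map_zero]))
  calc (1 : ℝ) ≤ |(k : ℝ)| := mod_cast Int.one_le_abs hk0
    _ = ‖∏ σ : K →ₐ[ℚ] ℂ, σ y‖ := by
        rw [← Algebra.norm_eq_prod_embeddings, ← hk]
        simp
    _ = ‖σ₀ y‖ * ∏ σ ∈ Finset.univ.erase σ₀, ‖σ y‖ := by
        rw [norm_prod, ← Finset.mul_prod_erase _ _ (Finset.mem_univ σ₀)]
    _ ≤ ‖σ₀ y‖ * ∏ _σ ∈ Finset.univ.erase σ₀, B := by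
        gcongr with σ
        exact hB σ
    _ = _ := by simp

lemma exists_one_lt_norm_embedding {K : Type*} [Field K] [NumberField K] {c : K} (hc0 : c ≠ 0)
    (h_int : IsIntegral ℤ c) (hc : ∀ k : ℕ, k ≠ 0 → c ^ k ≠ 1) : ∃ σ : K →ₐ[ℚ] ℂ, 1 < ‖σ c‖ := by
  by_contra! hle
  obtain ⟨k, hk, hck⟩ := NumberField.Embeddings.pow_eq_one_of_norm_le_one K ℂ hc0 h_int
    fun φ => hle φ.toRatAlgHom
  exact hc k hk.ne' hck

/-- The matrix `S` with its entries regarded in the ring `R`. -/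
abbrev intMatrixCast {ι : Type*} (R : Type*) [Ring R] (S : Matrix ι ι ℤ) : Matrix ι ι R :=
  S.map (Int.cast : ℤ → R)

section IntegerMatrices

variable {ι K : Type*} [Fintype ι] [Field K]

lemma eventually_one_le_norm_pow_mul_norm_embedding [NumberField K] {v : ι → K}
    (hv : ∀ i, IsIntegral ℤ (v i)) (σ₀ : K →ₐ[ℚ] ℂ) :
    ∀ᶠ C : ℝ in atTop, ∀ n : ι → ℤ, ∑ i, n i • v i ≠ 0 →
      1 ≤ C * ‖n‖ ^ (Fintype.card (K →ₐ[ℚ] ℂ) - 1) * ‖∑ i, n i • σ₀ (v i)‖ := by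
  let b := ‖fun (σ : K →ₐ[ℚ] ℂ) i => σ (v i)‖
  filter_upwards [eventually_ge_atTop
    ((Fintype.card ι * b) ^ (Fintype.card (K →ₐ[ℚ] ℂ) - 1))] with C hC n hn
  have hbound (σ : K →ₐ[ℚ] ℂ) : ‖σ (∑ i, n i • v i)‖ ≤ Fintype.card ι * b * ‖n‖ := by
    calc ‖σ (∑ i, n i • v i)‖ ≤ ∑ i, ‖n i‖ * ‖σ (v i)‖ := by
          rw [map_sum]
          exact (norm_sum_le _ _).trans_eq (by simp [Int.norm_eq_abs])
      _ ≤ ∑ _i : ι, ‖n‖ * b := by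
          gcongr with i
          · exact norm_le_pi_norm n i
          · exact (norm_le_pi_norm _ i).trans (norm_le_pi_norm (fun σ i => σ (v i)) σ)
      _ = _ := by simp; ring
  have h_int : IsIntegral ℤ (∑ i, n i • v i) := IsIntegral.sum _ fun i _ => (hv i).smul (n i)
  calc 1 ≤ ‖σ₀ (∑ i, n i • v i)‖ * (Fintype.card ι * b * ‖n‖) ^ _ :=
        one_le_norm_embedding_mul_pow hn h_int hbound σ₀
    _ ≤ ‖σ₀ (∑ i, n i • v i)‖ * (C * ‖n‖ ^ _) := by rw [mul_pow]; gcongr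
    _ = _ := by simp [mul_comm]

lemma exists_real_vector_of_complex (n : ι → ℤ) {u : ι → ℂ} (hu : ∑ i, n i • u i ≠ 0) :
    ∃ w : ι → ℝ, ∑ i, n i • w i = 1 / 2 ∧ ∀ M : Matrix ι ι ℤ,
      ‖(intMatrixCast ℝ M).mulVec w‖ ≤ ‖(intMatrixCast ℂ M).mulVec u‖ / ‖∑ i, n i • u i‖ := by
  set y := ∑ i, n i • u i
  refine ⟨fun i => (u i / (2 * y)).re, ?_, fun M => ?_⟩
  · calc ∑ i, n i • (u i / (2 * y)).re = ((∑ i, n i • u i) / (2 * y)).re := by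
          simp only [Finset.sum_div, Complex.re_sum, smul_div_assoc, Complex.smul_re]
      _ = 1 / 2 := by
          rw [div_mul_cancel_right₀ hu]
          norm_num
  · refine (pi_norm_le_iff_of_nonneg (by positivity)).2 fun i => ?_
    have hre : (intMatrixCast ℝ M).mulVec (fun i => (u i / (2 * y)).re) i =
        ((intMatrixCast ℂ M).mulVec u i / (2 * y)).re := by
      simp only [Matrix.mulVec, dotProduct, Finset.sum_div, Complex.re_sum, Matrix.map_apply,
        ← zsmul_eq_mul, smul_div_assoc, Complex.smul_re]
    calc ‖_‖ ≤ ‖(intMatrixCast ℂ M).mulVec u i / (2 * y)‖ := hre ▸ Complex.abs_re_le_norm _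
      _ = ‖(intMatrixCast ℂ M).mulVec u i‖ / (2 * ‖y‖) := by simp
      _ ≤ _ := by
          gcongr
          · exact norm_le_pi_norm _ i
          · linarith [norm_nonneg y]

variable [DecidableEq ι]

lemma charpoly_intMatrixCast (S : Matrix ι ι ℤ) :
    (intMatrixCast K S).charpoly = S.charpoly.map (Int.castRingHom K) :=
  Matrix.charpoly_map S (Int.castRingHom K)

lemma isIntegral_of_isRoot_charpoly {S : Matrix ι ι ℤ} {c : K}
    (hc : (intMatrixCast K S).charpoly.IsRoot c) : IsIntegral ℤ c := by
  refine ⟨S.charpoly, S.charpoly_monic, ?_⟩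
  rwa [charpoly_intMatrixCast, Polynomial.IsRoot.def, Polynomial.eval_map] at hc

lemma ne_zero_of_isRoot_charpoly [CharZero K] {S : Matrix ι ι ℤ} (hS : S.det ≠ 0) {c : K}
    (hc : (intMatrixCast K S).charpoly.IsRoot c) : c ≠ 0 := by
  rintro rfl
  have hdet := Matrix.det_eq_sign_charpoly_coeff (intMatrixCast K S)
  rw [Polynomial.coeff_zero_eq_eval_zero, hc.eq_zero, mul_zero] at hdet
  have hcast : (intMatrixCast K S).det = (S.det : K) := ((Int.castRingHom K).map_det S).symm
  exact hS (by exact_mod_cast hcast.symm.trans hdet)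

lemma exists_integral_genEigenvectors [NumberField K] (S : Matrix ι ι ℤ)
    (hsplit : (intMatrixCast K S).charpoly.Splits) :
    ∃ U : Finset (ι → K), Submodule.span K (U : Set (ι → K)) = ⊤ ∧
      ∀ v ∈ U, (∀ i, IsIntegral ℤ (v i)) ∧ ∃ c, (intMatrixCast K S).charpoly.IsRoot c ∧
        v ∈ Module.End.maxGenEigenspace (Matrix.toLin' (intMatrixCast K S)) c := by
  classical
  let f : Module.End K (ι → K) := Matrix.toLin' (intMatrixCast K S)
  have hf : f.charpoly = (intMatrixCast K S).charpoly := Matrix.charpoly_toLin' _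
  let G : Set (ι → K) := {v | (∀ i, IsIntegral ℤ (v i)) ∧
    ∃ c, (intMatrixCast K S).charpoly.IsRoot c ∧ v ∈ f.maxGenEigenspace c}
  have hspan : Submodule.span K G = ⊤ := by
    rw [eq_top_iff, ← iSup_maxGenEigenspace_eq_top_of_splits (hf ▸ hsplit)]
    refine iSup₂_le fun c hc v hv => ?_
    obtain ⟨b, hb0, hb⟩ := exists_integral_multiples ℤ ℚ (Finset.univ.image v)
    have hbv : (b : K) • v ∈ G :=
      ⟨fun i => by simpa using hb (v i) (Finset.mem_image_of_mem v (Finset.mem_univ i)),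
        c, hf ▸ hc, Submodule.smul_mem _ _ hv⟩
    rw [← inv_smul_smul₀ (Int.cast_ne_zero.2 hb0 : (b : K) ≠ 0) v]
    exact Submodule.smul_mem _ _ (Submodule.subset_span hbv)
  obtain ⟨U, hUG, hU, hli⟩ := exists_linearIndependent K G
  refine ⟨hli.setFinite.toFinset, by simpa [hU] using hspan, fun v hv => hUG ?_⟩
  simpa using hv

lemma map_mem_maxGenEigenspace_intMatrixCast {L : Type*} [Field L] (σ : K →+* L) {S : Matrix ι ι ℤ}
    {c : K} {v : ι → K}
    (hv : v ∈ Module.End.maxGenEigenspace (Matrix.toLin' (intMatrixCast K S)) c) :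
    σ ∘ v ∈ Module.End.maxGenEigenspace (Matrix.toLin' (intMatrixCast L S)) (σ c) := by
  obtain ⟨m, hm⟩ := (Module.End.mem_maxGenEigenspace _ _ _).1 hv
  refine (Module.End.mem_maxGenEigenspace _ _ _).2 ⟨m, ?_⟩
  clear hv
  induction m generalizing v with
  | zero =>
    obtain rfl : v = 0 := by simpa using hm
    ext; simp
  | succ m ih =>
    rw [pow_succ, Module.End.mul_apply] at hm ⊢
    rw [← ih hm]
    congr 1
    ext i
    simp [Matrix.mulVec, dotProduct]

lemma eventually_norm_inv_pow_mulVec_le {S : Matrix ι ι ℤ} (hS : IsUnit S.det) {z : ℂ}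
    (hz : 1 < ‖z‖) {u : ι → ℂ}
    (hu : u ∈ Module.End.maxGenEigenspace (Matrix.toLin' (intMatrixCast ℂ S)) z) :
    ∀ᶠ r : ℝ in nhdsWithin 1 (Set.Iio 1), ∀ᶠ C : ℝ in atTop,
      ∀ j : ℕ, ‖(intMatrixCast ℂ (S⁻¹ ^ j)).mulVec u‖ ≤ C * r ^ j := by
  filter_upwards [Ioo_mem_nhdsLT (inv_lt_one_of_one_lt₀ hz)] with r hr
  have hr0 : 0 < r := lt_trans (by positivity) hr.1
  have hinv : Matrix.toLin' (intMatrixCast ℂ S⁻¹) * Matrix.toLin' (intMatrixCast ℂ S) =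
      (1 : Module.End ℂ (ι → ℂ)) := by
    rw [Module.End.mul_eq_comp, ← Matrix.toLin'_mul, ← Matrix.map_mul_intCast,
      Matrix.nonsing_inv_mul S hS]
    simp [Module.End.one_eq_id]
  obtain ⟨C₀, hC₀⟩ := exists_norm_pow_apply_le_of_mem_maxGenEigenspace hinv
    (norm_pos_iff.1 (one_pos.trans hz)) hr.1 hu
  filter_upwards [eventually_ge_atTop C₀] with C hC j
  have hpow : intMatrixCast ℂ (S⁻¹ ^ j) = intMatrixCast ℂ S⁻¹ ^ j :=
    map_pow (Int.castRingHom ℂ).mapMatrix S⁻¹ j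
  rw [hpow, ← Matrix.toLin'_apply, Matrix.toLin'_pow]
  exact (hC₀ j).trans (by gcongr)

end IntegerMatrices

lemma NoRootOfUnityEigenvalue.exists_one_lt_norm_embedding {K : Type*} [Field K] [NumberField K]
    {d : ℕ} {S : Matrix (Fin d) (Fin d) ℤ} (hEig : NoRootOfUnityEigenvalue S) (hS : S.det ≠ 0)
    {c : K} (hc : (intMatrixCast K S).charpoly.IsRoot c) : ∃ σ : K →ₐ[ℚ] ℂ, 1 < ‖σ c‖ := by
  refine _root_.exists_one_lt_norm_embedding (ne_zero_of_isRoot_charpoly hS hc)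
    (isIntegral_of_isRoot_charpoly hc) fun k hk hck => ?_
  let σ : K →+* ℂ := (IsAlgClosed.lift : K →ₐ[ℚ] ℂ)
  refine hEig (σ c) ?_ k hk (by rw [← map_pow, hck, map_one])
  have hroot := hc.map (f := σ)
  rwa [charpoly_intMatrixCast, Polynomial.map_map, RingHom.ext_int (σ.comp _) (Int.castRingHom ℂ),
    ← charpoly_intMatrixCast] at hroot

lemma NoRootOfUnityEigenvalue.exists_contracted_complex_vector {d : ℕ}
    {S : Matrix (Fin d) (Fin d) ℤ} (hEig : NoRootOfUnityEigenvalue S) (hS : IsUnit S.det) :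
    ∃ (C : ℝ) (m : ℕ) (r : ℝ), 0 ≤ C ∧ 0 < r ∧ r < 1 ∧ ∀ n : Fin d → ℤ, n ≠ 0 →
      ∃ u : Fin d → ℂ, 1 ≤ C * ‖n‖ ^ m * ‖∑ i, n i • u i‖ ∧
        ∀ j : ℕ, ‖(intMatrixCast ℂ (S⁻¹ ^ j)).mulVec u‖ ≤ C * r ^ j := by
  let K := (S.charpoly.map (Int.castRingHom ℚ)).SplittingField
  have : NumberField K := ⟨⟩
  have : Nonempty (K →ₐ[ℚ] ℂ) := ⟨IsAlgClosed.lift⟩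
  have hsplit : (intMatrixCast K S).charpoly.Splits := by
    have h := Polynomial.SplittingField.splits (S.charpoly.map (Int.castRingHom ℚ))
    rw [charpoly_intMatrixCast]
    rwa [Polynomial.map_map, RingHom.ext_int (RingHom.comp _ _) (Int.castRingHom K)] at h
  obtain ⟨U, hspan, hU⟩ := exists_integral_genEigenvectors S hsplit
  choose! h_int c hc hgen using hU
  choose! σ hσ using fun v (hv : v ∈ U) => hEig.exists_one_lt_norm_embedding hS.ne_zero (hc v hv)
  have hdecay := (Filter.eventually_all_finset U).2 fun v hv =>
    eventually_norm_inv_pow_mulVec_le hS (hσ v hv)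
      (map_mem_maxGenEigenspace_intMatrixCast (σ v : K →+* ℂ) (hgen v hv))
  have hlow := (Filter.eventually_all_finset U).2 fun v hv =>
    eventually_one_le_norm_pow_mul_norm_embedding (h_int v hv) (σ v)
  obtain ⟨r, hr, hr0, hr1⟩ := (hdecay.and (Ioo_mem_nhdsLT zero_lt_one)).exists
  obtain ⟨C, ⟨hCdecay, hClow⟩, hC⟩ :=
    ((((Filter.eventually_all_finset U).2 hr).and hlow).and (eventually_ge_atTop 0)).exists
  refine ⟨C, Fintype.card (K →ₐ[ℚ] ℂ) - 1, r, hC, hr0, hr1, fun n hn => ?_⟩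
  obtain ⟨v, hv, hnv⟩ : ∃ v ∈ U, ∑ i, n i • v i ≠ 0 := by
    by_contra! hzero
    have hform : Fintype.linearCombination K (fun i => (n i : K)) = 0 :=
      LinearMap.ext_on hspan fun v hv => by
        simpa [Fintype.linearCombination_apply, mul_comm] using hzero v hv
    refine hn (funext fun i => ?_)
    simpa [Fintype.linearCombination_apply, Pi.single_apply] using
      LinearMap.congr_fun hform (Pi.single i 1)
  exact ⟨σ v ∘ v, hClow v hv n hnv, hCdecay v hv⟩

/-- Quantitative transversality of the directions contracted by the powers of `S⁻¹` to the kernels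
of nonzero integer linear forms `n`, with a loss which is polynomial in `n`. The value `1 / 2` makes
translation by `w` change the sign of the character with frequency `n` of the torus. -/
def HasContractedVectors {ι : Type*} [Fintype ι] [DecidableEq ι] (S : Matrix ι ι ℤ) (C : ℝ) (m : ℕ)
    (r : ℝ) : Prop :=
  ∀ n : ι → ℤ, n ≠ 0 → ∃ w : ι → ℝ, ∑ i, n i • w i = 1 / 2 ∧
    ∀ j : ℕ, ‖(intMatrixCast ℝ (S⁻¹ ^ j)).mulVec w‖ ≤ C * ‖n‖ ^ m * r ^ j

lemma NoRootOfUnityEigenvalue.exists_hasContractedVectors {d : ℕ} {S : Matrix (Fin d) (Fin d) ℤ}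
    (hEig : NoRootOfUnityEigenvalue S) (hS : IsUnit S.det) :
    ∃ (C : ℝ) (m : ℕ) (r : ℝ), 0 ≤ C ∧ 0 < r ∧ r < 1 ∧ HasContractedVectors S C m r := by
  obtain ⟨C, m, r, hC, hr0, hr1, h⟩ := hEig.exists_contracted_complex_vector hS
  refine ⟨C * C, m, r, by positivity, hr0, hr1, fun n hn => ?_⟩
  obtain ⟨u, hlow, hu⟩ := h n hn
  have hy : 0 < ‖∑ i, n i • u i‖ := (norm_nonneg _).lt_of_ne fun h0 => by
    rw [← h0, mul_zero] at hlow
    exact absurd hlow (by norm_num)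
  obtain ⟨w, hw, hwM⟩ := exists_real_vector_of_complex n (norm_pos_iff.1 hy)
  refine ⟨w, hw, fun j => (hwM _).trans ((div_le_iff₀ hy).2 ?_)⟩
  calc ‖(intMatrixCast ℂ (S⁻¹ ^ j)).mulVec u‖ ≤ C * r ^ j * 1 := (hu j).trans_eq (mul_one _).symm
    _ ≤ C * r ^ j * (C * ‖n‖ ^ m * ‖∑ i, n i • u i‖) := by gcongr
    _ = _ := by ring

lemma NoRootOfUnityEigenvalue.inv {d : ℕ} {S : Matrix (Fin d) (Fin d) ℤ}
    (hEig : NoRootOfUnityEigenvalue S) (hS : IsUnit S.det) : NoRootOfUnityEigenvalue S⁻¹ := by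
  intro z hz n hn hzn
  let φ := (Int.castRingHom ℂ).mapMatrix (m := Fin d)
  let U : (Matrix (Fin d) (Fin d) ℂ)ˣ :=
    ⟨φ S, φ S⁻¹, by rw [← map_mul, Matrix.mul_nonsing_inv S hS, map_one],
      by rw [← map_mul, Matrix.nonsing_inv_mul S hS, map_one]⟩
  have hz0 : z ≠ 0 := by
    rintro rfl
    simp [hn] at hzn
  have hspec : (Units.mk0 z hz0 : ℂ) ∈ spectrum ℂ (↑U⁻¹ : Matrix (Fin d) (Fin d) ℂ) :=
    Matrix.mem_spectrum_iff_isRoot_charpoly.2 hz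
  rw [spectrum.inv_mem_iff, inv_inv, Units.val_inv_eq_inv_val] at hspec
  exact hEig z⁻¹ (Matrix.mem_spectrum_iff_isRoot_charpoly.1 hspec) n hn
    (by rw [inv_pow, hzn, inv_one])

instance isProbabilityMeasure_unitAddCircle :
    IsProbabilityMeasure (volume : Measure UnitAddCircle) := ⟨UnitAddCircle.measure_univ⟩

instance isProbabilityMeasure_unitAddTorus (ι : Type*) [Fintype ι] :
    IsProbabilityMeasure (volume : Measure (UnitAddTorus ι)) :=
  inferInstanceAs (IsProbabilityMeasure (Measure.pi fun _ : ι => (volume : Measure UnitAddCircle)))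

lemma integrable_of_continuous_of_compactSpace {X E : Type*} [TopologicalSpace X]
    [CompactSpace X] [MeasurableSpace X] [OpensMeasurableSpace X] [NormedAddCommGroup E]
    {μ : Measure X} [IsFiniteMeasureOnCompacts μ] {g : X → E} (hg : Continuous g) :
    Integrable g μ :=
  hg.integrable_of_hasCompactSupport (HasCompactSupport.of_compactSpace g)

/-- The Fejér kernel of order `D` on the circle, written as a square to make its positivity
apparent. -/
def fejer (D : ℕ) (y : UnitAddCircle) : ℝ :=
  ‖∑ k : Fin D, fourier (k : ℤ) y‖ ^ 2 / D

lemma fejer_nonneg (D : ℕ) (y : UnitAddCircle) : 0 ≤ fejer D y := by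
  unfold fejer
  positivity

@[fun_prop]
lemma continuous_fejer (D : ℕ) : Continuous (fejer D) := by
  unfold fejer
  fun_prop

lemma fejer_eq_sum_fourier (D : ℕ) (y : UnitAddCircle) :
    (fejer D y : ℂ) = (D : ℂ)⁻¹ * ∑ q : Fin D × Fin D, fourier ((q.1 : ℤ) - (q.2 : ℤ)) y := by
  rw [fejer]
  push_cast
  rw [← Complex.mul_conj', map_sum, Finset.sum_mul_sum, Fintype.sum_prod_type, div_eq_inv_mul]
  simp only [sub_eq_add_neg, fourier_add, fourier_neg]

lemma integral_fourier_eq_ite (n : ℤ) :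
    ∫ y : UnitAddCircle, fourier n y = if n = 0 then 1 else 0 := by
  split_ifs with hn
  · simp [hn]
  · have h := integral_add_right_eq_self (μ := (volume : Measure UnitAddCircle))
      (fun y => fourier n y) ((1 / 2 / n : ℝ) : UnitAddCircle)
    simp only [fourier_add_half_inv_index hn one_pos, integral_neg] at h
    exact self_eq_neg.1 h.symm

lemma integral_fejer {D : ℕ} (hD : D ≠ 0) : ∫ y, fejer D y = 1 := by
  rw [← Complex.ofReal_inj, ← integral_complex_ofReal]
  simp_rw [fejer_eq_sum_fourier]
  rw [integral_const_mul, integral_finsetSum _ fun q _ =>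
    integrable_of_continuous_of_compactSpace (map_continuous _)]
  simp_rw [integral_fourier_eq_ite, sub_eq_zero, Fintype.sum_prod_type]
  simp [Fin.val_inj, hD]

lemma norm_le_norm_fourier_one_sub_one (y : UnitAddCircle) : ‖y‖ ≤ ‖fourier 1 y - 1‖ := by
  induction y using QuotientAddGroup.induction_on with
  | H x =>
    have hsin : |Real.sin (Real.pi * (x - round x))| = |Real.sin (Real.pi * x)| := by
      rw [mul_sub, mul_comm Real.pi (round x : ℝ), Real.sin_sub_int_mul_pi]
      simp [abs_mul]
    have hjordan : 2 / Real.pi * |Real.pi * (x - round x)|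
        ≤ |Real.sin (Real.pi * (x - round x))| := by
      refine Real.mul_abs_le_abs_sin ?_
      rw [abs_mul, abs_of_pos Real.pi_pos]
      nlinarith [abs_sub_round x, Real.pi_pos]
    have hexp : fourier 1 (x : UnitAddCircle)
        = Complex.exp (Complex.I * (2 * Real.pi * x : ℝ)) := by
      rw [fourier_coe_apply]
      push_cast
      congr 1
      ring
    change ‖(x : UnitAddCircle)‖ ≤ ‖fourier 1 (x : UnitAddCircle) - 1‖
    rw [hexp, Complex.norm_exp_I_mul_ofReal_sub_one, UnitAddCircle.norm_eq]
    rw [hsin, abs_mul, abs_of_pos Real.pi_pos, ← mul_assoc,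
      div_mul_cancel₀ _ Real.pi_ne_zero] at hjordan
    rw [mul_assoc, mul_div_cancel_left₀ _ two_ne_zero, Real.norm_eq_abs, abs_mul, abs_two]
    linarith [abs_nonneg (x - round x)]

lemma fejer_mul_sq_norm_le (D : ℕ) (y : UnitAddCircle) : fejer D y * ‖y‖ ^ 2 ≤ 4 / D := by
  have hgeom : (∑ k : Fin D, fourier (k : ℤ) y) * (fourier 1 y - 1) = fourier (D : ℤ) y - 1 := by
    have hpow (k : ℕ) : fourier (k : ℤ) y = fourier 1 y ^ k := by
      simp [fourier_apply, AddCircle.toCircle_nsmul]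
    simp_rw [hpow]
    rw [Fin.sum_univ_eq_sum_range (fun k => fourier 1 y ^ k), geom_sum_mul]
  have hnum : ‖fourier (D : ℤ) y - 1‖ ≤ 2 :=
    (norm_sub_le _ _).trans (by rw [fourier_apply, Circle.norm_coe, norm_one]; norm_num)
  calc fejer D y * ‖y‖ ^ 2 ≤ fejer D y * ‖fourier 1 y - 1‖ ^ 2 := by
        gcongr
        exacts [fejer_nonneg D y, norm_le_norm_fourier_one_sub_one y]
    _ = ‖fourier (D : ℤ) y - 1‖ ^ 2 / D := by
        rw [fejer, div_mul_eq_mul_div, ← mul_pow, ← norm_mul, hgeom]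
    _ ≤ 2 ^ 2 / D := by gcongr
    _ = 4 / D := by norm_num

lemma rpow_le_rpow_neg_mul_one_add_mul_sq {η D t : ℝ} (hη : 0 ≤ η) (hη2 : η ≤ 2) (hD : 0 < D)
    (ht : 0 ≤ t) : t ^ η ≤ D ^ (-(η / 2)) * (1 + D * t ^ 2) := by
  have hscale : D ^ (-(η / 2)) * (√D * t) ^ η = t ^ η := by
    rw [Real.mul_rpow (Real.sqrt_nonneg D) ht, Real.sqrt_eq_rpow, ← Real.rpow_mul hD.le,
      ← mul_assoc, ← Real.rpow_add hD]
    ring_nf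
    simp
  have hu : (√D * t) ^ η ≤ 1 + (√D * t) ^ 2 := by
    rcases le_total (√D * t) 1 with h | h
    · nlinarith [Real.rpow_le_one (by positivity) h hη, sq_nonneg (√D * t)]
    · rw [← Real.rpow_two]
      linarith [Real.rpow_le_rpow_of_exponent_le h hη2]
  rw [mul_pow, Real.sq_sqrt hD.le] at hu
  rw [← hscale]
  gcongr

lemma integral_fejer_mul_rpow_norm_le {D : ℕ} (hD : D ≠ 0) {η : ℝ} (hη : 0 ≤ η) (hη2 : η ≤ 2) :
    ∫ y, fejer D y * ‖y‖ ^ η ≤ 5 * (D : ℝ) ^ (-(η / 2)) := by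
  have hD0 : (0 : ℝ) < D := by positivity
  calc ∫ y, fejer D y * ‖y‖ ^ η ≤ ∫ y, (D : ℝ) ^ (-(η / 2)) * (fejer D y + 4) := by
        refine integral_mono (integrable_of_continuous_of_compactSpace ?_)
          (integrable_of_continuous_of_compactSpace (by fun_prop)) fun y => ?_
        · exact (continuous_fejer D).mul (continuous_norm.rpow_const fun _ => Or.inr hη)
        calc fejer D y * ‖y‖ ^ η
            ≤ fejer D y * ((D : ℝ) ^ (-(η / 2)) * (1 + D * ‖y‖ ^ 2)) := by
              gcongr
              exacts [fejer_nonneg D y,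
                rpow_le_rpow_neg_mul_one_add_mul_sq hη hη2 hD0 (norm_nonneg y)]
          _ = (D : ℝ) ^ (-(η / 2)) * (fejer D y + D * (fejer D y * ‖y‖ ^ 2)) := by ring
          _ ≤ (D : ℝ) ^ (-(η / 2)) * (fejer D y + D * (4 / D)) := by
              gcongr
              exact fejer_mul_sq_norm_le D y
          _ = (D : ℝ) ^ (-(η / 2)) * (fejer D y + 4) := by rw [mul_div_cancel₀ _ hD0.ne']
    _ = 5 * (D : ℝ) ^ (-(η / 2)) := by
        rw [integral_const_mul, integral_add (integrable_of_continuous_of_compactSpace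
          (continuous_fejer D)) (integrable_const _), integral_fejer hD]
        simp
        ring

lemma norm_rpow_le_sum_norm_rpow {ι E : Type*} [Fintype ι] [SeminormedAddCommGroup E]
    {η : ℝ} (hη : 0 < η) (y : ι → E) : ‖y‖ ^ η ≤ ∑ i, ‖y i‖ ^ η := by
  have hsum : 0 ≤ ∑ i, ‖y i‖ ^ η := by positivity
  rw [← Real.le_rpow_inv_iff_of_pos (norm_nonneg y) hsum hη]
  refine (pi_norm_le_iff_of_nonneg (by positivity)).2 fun i => ?_
  rw [Real.le_rpow_inv_iff_of_pos (norm_nonneg _) hsum hη]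
  exact Finset.single_le_sum (f := fun i => ‖y i‖ ^ η) (fun _ _ => by positivity)
    (Finset.mem_univ i)

section TorusFejer

variable {ι : Type*} [Fintype ι]

/-- The Fejér kernel of order `D` on the torus: the product of the kernels of the coordinates. -/
def torusFejer (D : ℕ) (y : UnitAddTorus ι) : ℝ := ∏ i, fejer D (y i)

lemma torusFejer_nonneg (D : ℕ) (y : UnitAddTorus ι) : 0 ≤ torusFejer D y :=
  Finset.prod_nonneg fun _ _ => fejer_nonneg _ _

@[fun_prop]
lemma continuous_torusFejer (D : ℕ) : Continuous (torusFejer D : UnitAddTorus ι → ℝ) :=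
  continuous_finsetProd _ fun i _ => (continuous_fejer D).comp (continuous_apply i)

lemma integral_torusFejer {D : ℕ} (hD : D ≠ 0) : ∫ y : UnitAddTorus ι, torusFejer D y = 1 := by
  unfold torusFejer
  rw [integral_fintype_prod_volume_eq_prod fun (_ : ι) y => fejer D y]
  simp only [integral_fejer hD, Finset.prod_const_one]

lemma integral_torusFejer_mul_eval {D : ℕ} (hD : D ≠ 0) (i : ι) (g : UnitAddCircle → ℝ) :
    ∫ y : UnitAddTorus ι, torusFejer D y * g (y i) = ∫ z, fejer D z * g z := by
  classical
  have hprod (y : UnitAddTorus ι) : torusFejer D y * g (y i)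
      = ∏ j, fejer D (y j) * if j = i then g (y j) else 1 := by
    rw [Finset.prod_mul_distrib, Finset.prod_ite_eq' Finset.univ i fun j => g (y j),
      if_pos (Finset.mem_univ i), torusFejer]
  simp_rw [hprod]
  rw [integral_fintype_prod_volume_eq_prod
    (fun (j : ι) (z : UnitAddCircle) => fejer D z * if j = i then g z else 1),
    ← Finset.mul_prod_erase _ _ (Finset.mem_univ i), Finset.prod_eq_one, mul_one]
  · simp only [if_true]
  · intro j hj
    simp only [if_neg (Finset.ne_of_mem_erase hj), mul_one, integral_fejer hD]

lemma integral_torusFejer_mul_rpow_norm_le {D : ℕ} (hD : D ≠ 0) {η : ℝ} (hη : 0 < η)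
    (hη2 : η ≤ 2) : ∫ y : UnitAddTorus ι, torusFejer D y * ‖y‖ ^ η
      ≤ 5 * Fintype.card ι * (D : ℝ) ^ (-(η / 2)) := by
  have hcont {E : Type} [SeminormedAddCommGroup E] : Continuous fun z : E => ‖z‖ ^ η :=
    continuous_norm.rpow_const fun _ => Or.inr hη.le
  have hcont_eval (i : ι) : Continuous fun y : UnitAddTorus ι => torusFejer D y * ‖y i‖ ^ η :=
    (continuous_torusFejer D).mul (hcont.comp (continuous_apply i))
  calc ∫ y : UnitAddTorus ι, torusFejer D y * ‖y‖ ^ η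
      ≤ ∫ y : UnitAddTorus ι, ∑ i, torusFejer D y * ‖y i‖ ^ η := by
        refine integral_mono (integrable_of_continuous_of_compactSpace
          ((continuous_torusFejer D).mul (continuous_norm.rpow_const fun _ => Or.inr hη.le)))
          (integrable_of_continuous_of_compactSpace
            (continuous_finsetSum _ fun i _ => hcont_eval i)) fun y => ?_
        rw [← Finset.mul_sum]
        exact mul_le_mul_of_nonneg_left (norm_rpow_le_sum_norm_rpow hη y) (torusFejer_nonneg D y)
    _ = ∑ _i : ι, ∫ z, fejer D z * ‖z‖ ^ η := by
        rw [integral_finsetSum _ fun i _ =>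
          integrable_of_continuous_of_compactSpace (hcont_eval i)]
        simp_rw [integral_torusFejer_mul_eval hD _ fun z => ‖z‖ ^ η]
    _ ≤ ∑ _i : ι, 5 * (D : ℝ) ^ (-(η / 2)) :=
        Finset.sum_le_sum fun _ _ => integral_fejer_mul_rpow_norm_le hD hη.le hη2
    _ = 5 * Fintype.card ι * (D : ℝ) ^ (-(η / 2)) := by
        rw [Finset.sum_const, Finset.card_univ, nsmul_eq_mul]
        ring

/-- Convolution with the Fejér kernel. As the kernel is even, the sign of `y` is immaterial. -/
def fejerConv (D : ℕ) (G : UnitAddTorus ι → ℂ) (x : UnitAddTorus ι) : ℂ :=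
  ∫ y, torusFejer D y * G (x + y)

lemma norm_sub_fejerConv_le {D : ℕ} (hD : D ≠ 0) {H η : NNReal} (hη : 0 < η) (hη2 : η ≤ 2)
    {G : UnitAddTorus ι → ℂ} (hG : HolderWith H η G) (x : UnitAddTorus ι) :
    ‖G x - fejerConv D G x‖ ≤ H * (5 * Fintype.card ι * (D : ℝ) ^ (-((η : ℝ) / 2))) := by
  have hGc := hG.continuous hη
  have hmean : ∫ y : UnitAddTorus ι, (torusFejer D y : ℂ) * G x = G x := by
    rw [integral_mul_const, integral_complex_ofReal, integral_torusFejer hD, Complex.ofReal_one,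
      one_mul]
  have hnear (y : UnitAddTorus ι) : ‖G x - G (x + y)‖ ≤ H * ‖y‖ ^ (η : ℝ) := by
    simpa [dist_eq_norm] using hG.dist_le x (x + y)
  calc ‖G x - fejerConv D G x‖
      = ‖∫ y, (torusFejer D y : ℂ) * (G x - G (x + y))‖ := by
        simp_rw [mul_sub]
        rw [integral_sub (integrable_of_continuous_of_compactSpace (by fun_prop))
          (integrable_of_continuous_of_compactSpace (by fun_prop)), hmean, fejerConv]
    _ ≤ ∫ y : UnitAddTorus ι, H * (torusFejer D y * ‖y‖ ^ (η : ℝ)) := by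
        refine norm_integral_le_of_norm_le ((integrable_of_continuous_of_compactSpace
          ((continuous_torusFejer D).mul
            (continuous_norm.rpow_const fun _ => Or.inr η.2))).const_mul _)
          (Eventually.of_forall fun y => ?_)
        rw [norm_mul, Complex.norm_real, Real.norm_of_nonneg (torusFejer_nonneg D y),
          mul_left_comm]
        exact mul_le_mul_of_nonneg_left (hnear y) (torusFejer_nonneg D y)
    _ ≤ H * (5 * Fintype.card ι * (D : ℝ) ^ (-((η : ℝ) / 2))) := by
        rw [integral_const_mul]
        gcongr
        exact integral_torusFejer_mul_rpow_norm_le hD hη hη2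

/-- The difference of two multi-indices in the box `[0, D)^ι`; these are the frequencies of the
Fejér kernel of order `D`. -/
def boxDiff {D : ℕ} (q : ι → Fin D × Fin D) : ι → ℤ := fun i => ((q i).1 : ℤ) - ((q i).2 : ℤ)

lemma norm_boxDiff_le {D : ℕ} (q : ι → Fin D × Fin D) : ‖boxDiff q‖ ≤ D := by
  refine (pi_norm_le_iff_of_nonneg D.cast_nonneg).2 fun i => ?_
  have h : |boxDiff q i| ≤ D := by
    have := (q i).1.isLt
    have := (q i).2.isLt
    simp only [boxDiff, abs_le]
    omega
  rw [Int.norm_eq_abs]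
  exact_mod_cast h

lemma mFourier_add_apply (n : ι → ℤ) (x y : UnitAddTorus ι) :
    UnitAddTorus.mFourier n (x + y) = UnitAddTorus.mFourier n x * UnitAddTorus.mFourier n y := by
  simp [UnitAddTorus.mFourier, fourier_apply, ← Finset.prod_mul_distrib, AddCircle.toCircle_add]

lemma mFourier_neg_apply (n : ι → ℤ) (x : UnitAddTorus ι) :
    UnitAddTorus.mFourier n (-x) = UnitAddTorus.mFourier (-n) x := by
  simp [UnitAddTorus.mFourier, fourier_apply]

lemma norm_mFourier_apply (n : ι → ℤ) (x : UnitAddTorus ι) :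
    ‖UnitAddTorus.mFourier n x‖ = 1 := by
  change ‖∏ i, fourier (n i) (x i)‖ = 1
  rw [norm_prod]
  exact Finset.prod_eq_one fun i _ => by rw [fourier_apply, Circle.norm_coe]

lemma torusFejer_eq_sum_mFourier [DecidableEq ι] (D : ℕ) (y : UnitAddTorus ι) :
    (torusFejer D y : ℂ) = (D : ℂ)⁻¹ ^ Fintype.card ι *
      ∑ q : ι → Fin D × Fin D, UnitAddTorus.mFourier (boxDiff q) y := by
  rw [torusFejer, Complex.ofReal_prod]
  simp_rw [fejer_eq_sum_fourier]
  rw [Finset.prod_mul_distrib, Finset.prod_const, Finset.card_univ, Finset.prod_univ_sum,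
    Fintype.piFinset_univ]
  rfl

lemma fejerConv_eq_sum [DecidableEq ι] (D : ℕ) {G : UnitAddTorus ι → ℂ} (hG : Continuous G)
    (x : UnitAddTorus ι) :
    fejerConv D G x = (D : ℂ)⁻¹ ^ Fintype.card ι * ∑ q : ι → Fin D × Fin D,
      (∫ y, UnitAddTorus.mFourier (boxDiff q) y * G y) * UnitAddTorus.mFourier (-boxDiff q) x := by
  have hshift : fejerConv D G x = ∫ y, (torusFejer D (y - x) : ℂ) * G y := by
    rw [fejerConv, ← integral_add_left_eq_self (fun y => (torusFejer D (y - x) : ℂ) * G y) x]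
    simp only [add_sub_cancel_left]
  simp_rw [hshift, torusFejer_eq_sum_mFourier, sub_eq_add_neg,
    mFourier_add_apply, mFourier_neg_apply, mul_assoc, Finset.sum_mul]
  rw [integral_const_mul, integral_finsetSum _ fun q _ =>
    integrable_of_continuous_of_compactSpace (by fun_prop)]
  simp_rw [mul_right_comm, integral_mul_const]

section Composition

variable {Ω : Type*} [MeasurableSpace Ω] {μ : Measure Ω} {F : Ω → ℂ} {Φ : Ω → UnitAddTorus ι}
  {G : UnitAddTorus ι → ℂ} {D : ℕ}

lemma norm_integral_mul_fejerConv_comp_le (hF : Integrable F μ) (hΦ : Measurable Φ)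
    (hG : Continuous G) {B : ℝ} (hB : ∀ x, ‖G x‖ ≤ B) {ε : ℝ}
    (hε : ∀ n : ι → ℤ, ‖n‖ ≤ D → ‖∫ ω, F ω * UnitAddTorus.mFourier n (Φ ω) ∂μ‖ ≤ ε) :
    ‖∫ ω, F ω * fejerConv D G (Φ ω) ∂μ‖ ≤ (D : ℝ) ^ Fintype.card ι * (B * ε) := by
  classical
  have h_int (n : ι → ℤ) : Integrable (fun ω => F ω * UnitAddTorus.mFourier n (Φ ω)) μ :=
    hF.mul_bdd (c := 1) ((map_continuous _).measurable.comp hΦ).aestronglyMeasurable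
      (Eventually.of_forall fun ω => (norm_mFourier_apply _ _).le)
  have hcoeff (q : ι → Fin D × Fin D) :
      ‖∫ y, UnitAddTorus.mFourier (boxDiff q) y * G y‖ ≤ B := by
    simpa using norm_integral_le_of_norm_le_const (μ := (volume : Measure (UnitAddTorus ι)))
      (f := fun y => UnitAddTorus.mFourier (boxDiff q) y * G y) (C := B)
      (Eventually.of_forall fun y => by rw [norm_mul, norm_mFourier_apply, one_mul]; exact hB y)
  have hexpand : ∫ ω, F ω * fejerConv D G (Φ ω) ∂μ = (D : ℂ)⁻¹ ^ Fintype.card ι *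
      ∑ q : ι → Fin D × Fin D, (∫ y, UnitAddTorus.mFourier (boxDiff q) y * G y) *
        ∫ ω, F ω * UnitAddTorus.mFourier (-boxDiff q) (Φ ω) ∂μ := by
    simp_rw [fejerConv_eq_sum D hG, mul_left_comm (F _)]
    rw [integral_const_mul]
    congr 1
    simp_rw [Finset.mul_sum, mul_left_comm (F _)]
    rw [integral_finsetSum _ fun q _ => (h_int _).const_mul _]
    simp_rw [integral_const_mul]
  calc ‖∫ ω, F ω * fejerConv D G (Φ ω) ∂μ‖
      ≤ (D : ℝ)⁻¹ ^ Fintype.card ι * ∑ _q : ι → Fin D × Fin D, B * ε := by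
        rw [hexpand, norm_mul, norm_pow, norm_inv, Complex.norm_natCast]
        refine mul_le_mul_of_nonneg_left (norm_sum_le_of_le _ fun q _ => ?_) (by positivity)
        rw [norm_mul]
        exact mul_le_mul (hcoeff q) (hε _ (by rw [norm_neg]; exact norm_boxDiff_le q))
          (norm_nonneg _) ((norm_nonneg _).trans (hcoeff q))
    _ = (D : ℝ) ^ Fintype.card ι * (B * ε) := by
        rw [Finset.sum_const, Finset.card_univ, Fintype.card_fun, Fintype.card_prod,
          Fintype.card_fin, nsmul_eq_mul, Nat.cast_pow, Nat.cast_mul, ← mul_assoc (_ ^ _),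
          ← mul_pow, ← mul_assoc (D : ℝ)⁻¹, inv_mul_mul_self]

lemma norm_integral_mul_comp_le_of_mFourier (hF : Integrable F μ) (hΦ : Measurable Φ)
    {H η : NNReal} (hη : 0 < η) (hη2 : η ≤ 2) (hG : HolderWith H η G) {B : ℝ}
    (hB : ∀ x, ‖G x‖ ≤ B) (hD : D ≠ 0) {ε : ℝ}
    (hε : ∀ n : ι → ℤ, ‖n‖ ≤ D → ‖∫ ω, F ω * UnitAddTorus.mFourier n (Φ ω) ∂μ‖ ≤ ε) :
    ‖∫ ω, F ω * G (Φ ω) ∂μ‖ ≤ (D : ℝ) ^ Fintype.card ι * (B * ε)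
      + H * (5 * Fintype.card ι * (D : ℝ) ^ (-((η : ℝ) / 2))) * ∫ ω, ‖F ω‖ ∂μ := by
  have hGc := hG.continuous hη
  set δ : ℝ := H * (5 * Fintype.card ι * (D : ℝ) ^ (-((η : ℝ) / 2)))
  have hcomp {g : UnitAddTorus ι → ℂ} (hg : Continuous g) :
      Integrable (fun ω => F ω * g (Φ ω)) μ := by
    obtain ⟨c, hc⟩ := isCompact_univ.exists_bound_of_continuousOn hg.continuousOn
    exact hF.mul_bdd (c := c) (hg.measurable.comp hΦ).aestronglyMeasurable
      (Eventually.of_forall fun ω => hc _ (Set.mem_univ _))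
  have hconv : Continuous (fejerConv D G) := by
    classical
    simp_rw [funext fun x => fejerConv_eq_sum D hGc x]
    fun_prop
  have hdiff : ‖∫ ω, F ω * (G (Φ ω) - fejerConv D G (Φ ω)) ∂μ‖ ≤ δ * ∫ ω, ‖F ω‖ ∂μ := by
    rw [← integral_const_mul]
    refine norm_integral_le_of_norm_le (hF.norm.const_mul δ) (Eventually.of_forall fun ω => ?_)
    rw [norm_mul, mul_comm]
    exact mul_le_mul_of_nonneg_right (norm_sub_fejerConv_le hD hη hη2 hG _) (norm_nonneg _)
  have hsplit : ∫ ω, F ω * G (Φ ω) ∂μ = ∫ ω, F ω * fejerConv D G (Φ ω) ∂μ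
      + ∫ ω, F ω * (G (Φ ω) - fejerConv D G (Φ ω)) ∂μ := by
    simp_rw [mul_sub]
    rw [integral_sub (hcomp hGc) (hcomp hconv), add_sub_cancel]
  rw [hsplit]
  exact norm_add_le_of_le (norm_integral_mul_fejerConv_comp_le hF hΦ hGc hB hε) hdiff

end Composition

end TorusFejer

section TorusAut

variable {d : ℕ}

/-- The action of integer matrices on the torus, as a homomorphism into the additive
endomorphisms: powers of matrices correspond to iterates of `torusAut`. -/
def torusAutHom (d : ℕ) : Matrix (Fin d) (Fin d) ℤ →* AddMonoid.End (Torus d) where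
  toFun A :=
    { toFun := torusAut A
      map_zero' := by funext i; simp [torusAut]
      map_add' := fun x y => by funext i; simp [torusAut, Finset.sum_add_distrib] }
  map_one' := by
    ext x i
    change torusAut 1 x i = x i
    simp [torusAut, Matrix.one_apply, ite_smul]
  map_mul' A B := by
    ext x i
    change torusAut (A * B) x i = torusAut A (torusAut B x) i
    simp only [torusAut, Matrix.mul_apply, Finset.sum_smul, Finset.smul_sum, mul_smul]
    exact Finset.sum_comm

lemma torusAut_add (A : Matrix (Fin d) (Fin d) ℤ) (x y : Torus d) :
    torusAut A (x + y) = torusAut A x + torusAut A y := map_add (torusAutHom d A) x y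

lemma torusAut_one (x : Torus d) : torusAut 1 x = x :=
  DFunLike.congr_fun (map_one (torusAutHom d)) x

lemma torusAut_mul (A B : Matrix (Fin d) (Fin d) ℤ) (x : Torus d) :
    torusAut (A * B) x = torusAut A (torusAut B x) :=
  DFunLike.congr_fun (map_mul (torusAutHom d) A B) x

lemma torusAut_iterate (A : Matrix (Fin d) (Fin d) ℤ) (n : ℕ) :
    (torusAut A)^[n] = torusAut (A ^ n) :=
  (congrArg (fun T : AddMonoid.End (Torus d) => ⇑T) (map_pow (torusAutHom d) A n)).symm

lemma Titer_torusAut (S : Matrix (Fin d) (Fin d) ℤ) (k : ℤ) :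
    Titer (torusAut S) (torusAut S⁻¹) k = torusAut (S ^ k) := by
  cases k with
  | ofNat n => simp [Titer, torusAut_iterate]
  | negSucc n => rw [Titer, torusAut_iterate, zpow_negSucc, Matrix.inv_pow']

lemma torusAut_zpow_add {S : Matrix (Fin d) (Fin d) ℤ} (hS : IsUnit S.det) (j k : ℤ)
    (x : Torus d) : torusAut (S ^ (j + k)) x = torusAut (S ^ j) (torusAut (S ^ k) x) := by
  rw [Matrix.zpow_add hS, torusAut_mul]

lemma exists_lipschitzWith_torusAut (A : Matrix (Fin d) (Fin d) ℤ) :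
    ∃ Λ : NNReal, LipschitzWith Λ (torusAut A) := by
  refine ⟨_, AddMonoidHomClass.lipschitz_of_bound (torusAutHom d A)
    (∑ i, ∑ j, |(A i j : ℝ)|) fun x => ?_⟩
  refine (pi_norm_le_iff_of_nonneg (by positivity)).2 fun i => ?_
  calc ‖torusAut A x i‖ ≤ ∑ j, |(A i j : ℝ)| * ‖x‖ := by
        refine norm_sum_le_of_le _ fun j _ => (norm_zsmul_le (A i j) (x j)).trans ?_
        rw [Int.norm_eq_abs]
        gcongr
        exact norm_le_pi_norm x j
    _ ≤ (∑ i, ∑ j, |(A i j : ℝ)|) * ‖x‖ := by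
        rw [← Finset.sum_mul]
        exact mul_le_mul_of_nonneg_right (Finset.single_le_sum (f := fun i => ∑ j, |(A i j : ℝ)|)
          (fun _ _ => by positivity) (Finset.mem_univ i)) (norm_nonneg x)

@[fun_prop]
lemma continuous_torusAut (A : Matrix (Fin d) (Fin d) ℤ) : Continuous (torusAut A) := by
  unfold torusAut
  fun_prop

lemma measurePreserving_torusAut {A : Matrix (Fin d) (Fin d) ℤ} (hA : IsUnit A.det) :
    MeasurePreserving (torusAut A) (volume : Measure (Torus d)) volume := by
  refine AddMonoidHom.measurePreserving (f := torusAutHom d A) (continuous_torusAut A)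
    (fun x => ⟨torusAut A⁻¹ x, ?_⟩) rfl
  change torusAut A (torusAut A⁻¹ x) = x
  rw [← torusAut_mul, Matrix.mul_nonsing_inv A hA, torusAut_one]

lemma measurePreserving_torusAut_zpow {S : Matrix (Fin d) (Fin d) ℤ} (hS : IsUnit S.det)
    (k : ℤ) : MeasurePreserving (torusAut (S ^ k)) (volume : Measure (Torus d)) volume :=
  measurePreserving_torusAut (hS.det_zpow k)

/-- The projection of `ℝ^d` onto the torus. -/
def torusProj (v : Fin d → ℝ) : Torus d := fun i => (v i : UnitAddCircle)

lemma norm_torusProj_le (v : Fin d → ℝ) : ‖torusProj v‖ ≤ ‖v‖ := by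
  refine (pi_norm_le_iff_of_nonneg (norm_nonneg _)).2 fun i => le_trans ?_ (norm_le_pi_norm v i)
  rw [torusProj, UnitAddCircle.norm_eq]
  simpa using round_le (v i) 0

lemma torusAut_torusProj (A : Matrix (Fin d) (Fin d) ℤ) (v : Fin d → ℝ) :
    torusAut A (torusProj v) = torusProj ((intMatrixCast ℝ A).mulVec v) := by
  funext i
  change ∑ j, A i j • (v j : UnitAddCircle)
    = QuotientAddGroup.mk' _ (∑ j, (A i j : ℝ) * v j)
  simp only [map_sum, ← zsmul_eq_mul, map_zsmul]
  rfl

lemma mFourier_torusProj {n : Fin d → ℤ} {w : Fin d → ℝ} (hw : ∑ i, n i • w i = 1 / 2) :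
    UnitAddTorus.mFourier n (torusProj w) = -1 := by
  have hexp : UnitAddTorus.mFourier n (torusProj w)
      = Complex.exp (2 * Real.pi * Complex.I * (∑ i, n i • w i : ℝ)) := by
    rw [Complex.ofReal_sum, Finset.mul_sum, Complex.exp_sum]
    change ∏ i, fourier (n i) (torusProj w i) = _
    refine Finset.prod_congr rfl fun i _ => ?_
    rw [torusProj, fourier_coe_apply]
    congr 1
    push_cast [zsmul_eq_mul]
    ring
  rw [hexp, hw, ← Complex.exp_pi_mul_I]
  congr 1
  push_cast
  ring

end TorusAut

section Decorrelation

lemma lipschitzWith_cexp_I_mul : LipschitzWith 1 fun t : ℝ => Complex.exp (Complex.I * t) :=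
  LipschitzWith.of_dist_le_mul fun s t => by
    have hfactor : Complex.exp (Complex.I * s) - Complex.exp (Complex.I * t)
        = Complex.exp (Complex.I * t) * (Complex.exp (Complex.I * (s - t : ℝ)) - 1) := by
      rw [mul_sub_one, ← Complex.exp_add]
      push_cast
      ring_nf
    rw [dist_eq_norm, hfactor, norm_mul, Complex.norm_exp_I_mul_ofReal, NNReal.coe_one,
      dist_eq_norm]
    exact mul_le_mul_of_nonneg_left Real.norm_exp_I_mul_ofReal_sub_one_le zero_le_one

lemma norm_integral_mul_le_of_add_eq_neg {X : Type*} [AddGroup X] [MeasurableSpace X]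
    [MeasurableAdd X] {μ : Measure X} [μ.IsAddRightInvariant] [IsProbabilityMeasure μ]
    {F e : X → ℂ} {v : X} {δ : ℝ} (hFe : Integrable (fun x => F x * e x) μ)
    (he : ∀ x, e (x + v) = -e x) (hnorm : ∀ x, ‖e x‖ ≤ 1) (hF : ∀ x, ‖F (x + v) - F x‖ ≤ δ) :
    ‖∫ x, F x * e x ∂μ‖ ≤ δ / 2 := by
  have hFe' : Integrable (fun x => F (x + v) * e x) μ := by
    simpa [he] using (hFe.comp_add_right v).neg
  have hflip : ∫ x, F x * e x ∂μ = -∫ x, F (x + v) * e x ∂μ := by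
    rw [← integral_add_right_eq_self _ v, ← integral_neg]
    simp only [he, mul_neg]
  have htwice : 2 * ∫ x, F x * e x ∂μ = -∫ x, (F (x + v) - F x) * e x ∂μ := by
    simp_rw [sub_mul]
    rw [integral_sub hFe' hFe, two_mul]
    nth_rewrite 1 [hflip]
    ring
  have hbound : ‖∫ x, (F (x + v) - F x) * e x ∂μ‖ ≤ δ := by
    refine (norm_integral_le_of_norm_le_const (C := δ) (Eventually.of_forall fun x => ?_)).trans
      (by simp)
    rw [norm_mul]
    exact mul_le_of_le_one_right (norm_nonneg _) (hnorm x) |>.trans (hF x)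
  have hnorm2 := congrArg norm htwice
  rw [norm_mul, norm_neg, Complex.norm_ofNat] at hnorm2
  linarith

variable {d : ℕ} {S : Matrix (Fin d) (Fin d) ℤ} {η : ℝ}

/-- `F` varies by at most `A * c ^ η` along every vector whose backward orbit under `S` stays
within distance `c` of the origin. Functions of the past `(f ∘ S ^ k)`, `k ≤ 0`, have this property
with a constant `A` that does not depend on how far back in time they reach. -/
def HolderAlongPast {E : Type*} [SeminormedAddCommGroup E] (S : Matrix (Fin d) (Fin d) ℤ)
    (η A : ℝ) (F : Torus d → E) : Prop :=
  ∀ (v : Fin d → ℝ) (c : ℝ), (∀ k ≤ (0 : ℤ), ‖(intMatrixCast ℝ (S ^ k)).mulVec v‖ ≤ c) →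
    ∀ x, ‖F (x + torusProj v) - F x‖ ≤ A * c ^ η

lemma holderAlongPast_comp_torusAut_zpow {E : Type*} [SeminormedAddCommGroup E] {H η : NNReal}
    {f : Torus d → E} (hf : HolderWith H η f) {k : ℤ} (hk : k ≤ 0) :
    HolderAlongPast S η H fun x => f (torusAut (S ^ k) x) := fun v c hv x => by
  have hclose : dist (torusAut (S ^ k) (x + torusProj v)) (torusAut (S ^ k) x) ≤ c := by
    rw [torusAut_add, dist_self_add_left, torusAut_torusProj]
    exact (norm_torusProj_le _).trans (hv k hk)
  rw [← dist_eq_norm]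
  exact hf.dist_le_of_le hclose

namespace HolderAlongPast

section Group

variable {E : Type*} [SeminormedAddCommGroup E] {A : ℝ} {F : Torus d → E}

lemma nonneg (hF : HolderAlongPast S η A F) : 0 ≤ A := by
  simpa using (norm_nonneg _).trans (hF 0 1 (by simp) 0)

lemma sub_const (hF : HolderAlongPast S η A F) (a : E) :
    HolderAlongPast S η A fun x => F x - a := fun v c hv x => by
  simpa using hF v c hv x

lemma sum {ι : Type*} {s : Finset ι} {A : ι → ℝ} {F : ι → Torus d → E}
    (hF : ∀ k ∈ s, HolderAlongPast S η (A k) (F k)) :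
    HolderAlongPast S η (∑ k ∈ s, A k) fun x => ∑ k ∈ s, F k x := fun v c hv x => by
  rw [← Finset.sum_sub_distrib, Finset.sum_mul]
  exact norm_sum_le_of_le _ fun k hk => hF k hk v c hv x

lemma lipschitz_comp {E' : Type*} [SeminormedAddCommGroup E'] {K : NNReal} {φ : E → E'}
    (hφ : LipschitzWith K φ) (hF : HolderAlongPast S η A F) :
    HolderAlongPast S η (K * A) fun x => φ (F x) := fun v c hv x => by
  rw [mul_assoc]
  exact (hφ.norm_sub_le _ _).trans (mul_le_mul_of_nonneg_left (hF v c hv x) K.coe_nonneg)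

end Group

section Ring

variable {𝕜 : Type*} [NormedField 𝕜] {A A' : ℝ} {F G : Torus d → 𝕜}

lemma const_mul (a : 𝕜) (hF : HolderAlongPast S η A F) :
    HolderAlongPast S η (‖a‖ * A) fun x => a * F x := fun v c hv x => by
  rw [← mul_sub, norm_mul, mul_assoc]
  exact mul_le_mul_of_nonneg_left (hF v c hv x) (norm_nonneg a)

lemma mul {B B' : ℝ} (hF : HolderAlongPast S η A F) (hG : HolderAlongPast S η A' G)
    (hB : ∀ x, ‖F x‖ ≤ B) (hB' : ∀ x, ‖G x‖ ≤ B') :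
    HolderAlongPast S η (A * B' + B * A') fun x => F x * G x := fun v c hv x => by
  have hF' := hF v c hv x
  have hG' := hG v c hv x
  calc ‖F (x + torusProj v) * G (x + torusProj v) - F x * G x‖
      = ‖(F (x + torusProj v) - F x) * G (x + torusProj v)
          + F x * (G (x + torusProj v) - G x)‖ := by ring_nf
    _ ≤ A * c ^ η * B' + B * (A' * c ^ η) := by
        refine norm_add_le_of_le ?_ ?_ <;> rw [norm_mul]
        · exact mul_le_mul hF' (hB' _) (norm_nonneg _) ((norm_nonneg _).trans hF')
        · exact mul_le_mul (hB x) hG' (norm_nonneg _) ((norm_nonneg _).trans (hB x))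
    _ = (A * B' + B * A') * c ^ η := by ring

end Ring

end HolderAlongPast

lemma HasContractedVectors.norm_integral_mul_mFourier_le {C r A : ℝ} {m : ℕ}
    (hvec : HasContractedVectors S C m r) (hS : IsUnit S.det) (hC : 0 ≤ C) (hr0 : 0 ≤ r)
    (hr1 : r ≤ 1) {F : Torus d → ℂ} (hF : Continuous F) (hpast : HolderAlongPast S η A F)
    {n : Fin d → ℤ} (hn : n ≠ 0) (p : ℕ) :
    ‖∫ x, F x * UnitAddTorus.mFourier n (torusAut (S ^ p) x)‖
      ≤ A * (C * ‖n‖ ^ m * r ^ p) ^ η := by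
  obtain ⟨w, hw, hcontr⟩ := hvec n hn
  set v := (intMatrixCast ℝ (S⁻¹ ^ p)).mulVec w
  have hv : torusAut (S ^ p) (torusProj v) = torusProj w := by
    rw [← torusAut_torusProj, ← torusAut_mul, Matrix.inv_pow',
      Matrix.mul_nonsing_inv _ (by rw [Matrix.det_pow]; exact hS.pow p), torusAut_one]
  have hpast_v (k : ℤ) (hk : k ≤ 0) :
      ‖(intMatrixCast ℝ (S ^ k)).mulVec v‖ ≤ C * ‖n‖ ^ m * r ^ p := by
    obtain ⟨j, rfl⟩ := Int.exists_eq_neg_ofNat hk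
    rw [Matrix.mulVec_mulVec, Matrix.zpow_neg hS, zpow_natCast, ← Matrix.inv_pow',
      ← Matrix.map_mul_intCast, ← pow_add]
    exact (hcontr _).trans (by gcongr ?_ * ?_; exact pow_le_pow_of_le_one hr0 hr1 (by lia))
  have hhalf : ‖∫ x, F x * UnitAddTorus.mFourier n (torusAut (S ^ p) x)‖
      ≤ A * (C * ‖n‖ ^ m * r ^ p) ^ η / 2 := by
    refine norm_integral_mul_le_of_add_eq_neg (v := torusProj v)
      (integrable_of_continuous_of_compactSpace (by fun_prop)) (fun x => ?_)
      (fun x => (norm_mFourier_apply _ _).le) (hpast v _ hpast_v)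
    rw [torusAut_add, mFourier_add_apply, hv, mFourier_torusProj hw, mul_neg_one]
  have := (norm_nonneg _).trans (hpast v _ hpast_v 0)
  linarith

lemma HasContractedVectors.norm_integral_mul_mFourier_le_of_integral_eq_zero {C r A R : ℝ} {m : ℕ}
    (hvec : HasContractedVectors S C m r) (hS : IsUnit S.det) (hC : 0 ≤ C) (hr0 : 0 ≤ r)
    (hr1 : r ≤ 1) {F : Torus d → ℂ} (hF : Continuous F) (hpast : HolderAlongPast S η A F)
    (hη : 0 ≤ η) (hmean : ∫ x, F x = 0) {n : Fin d → ℤ} (hn : ‖n‖ ≤ R) (p : ℕ) :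
    ‖∫ x, F x * UnitAddTorus.mFourier n (torusAut (S ^ p) x)‖ ≤ A * (C * R ^ m * r ^ p) ^ η := by
  have hA := hpast.nonneg
  have hR : 0 ≤ R := (norm_nonneg n).trans hn
  rcases eq_or_ne n 0 with rfl | hn0
  · simp only [UnitAddTorus.mFourier_zero, ContinuousMap.one_apply, mul_one, hmean, norm_zero]
    positivity
  · exact (hvec.norm_integral_mul_mFourier_le hS hC hr0 hr1 hF hpast hn0 p).trans (by gcongr)

/-- The degree `D` of a trigonometric approximation balances its error `D ^ (-κ)` against the cost
`D ^ K` of using it. -/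
lemma exists_rate_of_polynomial_loss {K κ σ : ℝ} (hK : 0 ≤ K) (hκ : 0 < κ) (hσ0 : 0 < σ)
    (hσ1 : σ < 1) : ∃ ρ : ℝ, 0 < ρ ∧ ρ < 1 ∧ ∀ p : ℕ, ∃ D : ℕ, D ≠ 0 ∧
      (D : ℝ) ^ (-κ) ≤ ρ ^ p ∧ (D : ℝ) ^ K * σ ^ p ≤ 2 ^ K * ρ ^ p := by
  set t := σ ^ (K + 1)⁻¹
  have ht0 : 0 < t := Real.rpow_pos_of_pos hσ0 _
  have ht1 : t < 1 := Real.rpow_lt_one hσ0.le hσ1 (by positivity)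
  have htK : t ^ (K + 1) = σ := Real.rpow_inv_rpow hσ0.le (by positivity)
  refine ⟨max (t ^ κ) t, lt_max_of_lt_right ht0, max_lt (Real.rpow_lt_one ht0.le ht1 hκ) ht1,
    fun p => ?_⟩
  have hu1 : 1 ≤ t⁻¹ ^ p := one_le_pow₀ ((one_le_inv₀ ht0).2 ht1.le)
  have hDge : t⁻¹ ^ p ≤ ⌈t⁻¹ ^ p⌉₊ := Nat.le_ceil _
  have hDle : (⌈t⁻¹ ^ p⌉₊ : ℝ) ≤ 2 * t⁻¹ ^ p := by
    linarith [Nat.ceil_lt_add_one (zero_le_one.trans hu1)]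
  have hswap (a : ℝ) : (t⁻¹ ^ p) ^ a = (t ^ (-a)) ^ p := by
    rw [← Real.rpow_natCast, ← Real.rpow_natCast, ← Real.rpow_mul (by positivity), mul_comm,
      Real.rpow_mul (by positivity), Real.inv_rpow ht0.le, Real.rpow_neg ht0.le]
  refine ⟨⌈t⁻¹ ^ p⌉₊, (Nat.ceil_pos.2 (by positivity)).ne', ?_, ?_⟩
  · calc (⌈t⁻¹ ^ p⌉₊ : ℝ) ^ (-κ) ≤ (t⁻¹ ^ p) ^ (-κ) :=
          Real.rpow_le_rpow_of_nonpos (by positivity) hDge (by linarith)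
      _ = (t ^ κ) ^ p := by rw [hswap, neg_neg]
      _ ≤ max (t ^ κ) t ^ p := by
          gcongr
          exact le_max_left _ _
  · calc (⌈t⁻¹ ^ p⌉₊ : ℝ) ^ K * σ ^ p ≤ (2 * t⁻¹ ^ p) ^ K * σ ^ p := by gcongr
      _ = 2 ^ K * t ^ p := by
          rw [Real.mul_rpow zero_le_two (by positivity), hswap, mul_assoc, ← mul_pow, ← htK,
            ← Real.rpow_add ht0, neg_add_cancel_left, Real.rpow_one]
      _ ≤ 2 ^ K * max (t ^ κ) t ^ p := by
          gcongr
          exact le_max_right _ _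

lemma HasContractedVectors.exists_decay_of_integral_eq_zero {C r : ℝ} {m : ℕ}
    (hvec : HasContractedVectors S C m r) (hS : IsUnit S.det) (hC : 0 ≤ C) (hr0 : 0 < r)
    (hr1 : r < 1) {η : NNReal} (hη : 0 < η) (hη2 : η ≤ 2) :
    ∃ C' ρ : ℝ, 0 ≤ C' ∧ 0 < ρ ∧ ρ < 1 ∧ ∀ {F G : Torus d → ℂ} {A B B' : ℝ} {H : NNReal} (p : ℕ),
      Continuous F → HolderAlongPast S η A F → (∀ x, ‖F x‖ ≤ B) → ∫ x, F x = 0 →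
      HolderWith H η G → (∀ x, ‖G x‖ ≤ B') →
      ‖∫ x, F x * G (torusAut (S ^ p) x)‖ ≤ C' * (A * B' + B * H) * ρ ^ p := by
  obtain ⟨ρ, hρ0, hρ1, hρ⟩ := exists_rate_of_polynomial_loss (K := d + m * η) (κ := η / 2)
    (σ := r ^ (η : ℝ)) (by positivity) (by positivity) (Real.rpow_pos_of_pos hr0 _)
    (Real.rpow_lt_one hr0.le hr1 hη)
  refine ⟨C ^ (η : ℝ) * 2 ^ (d + m * η : ℝ) + 5 * d, ρ, by positivity, hρ0, hρ1, ?_⟩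
  intro F G A B B' H p hF hpast hB hmean hG hB'
  obtain ⟨D, hD, hDerror, hDcost⟩ := hρ p
  have hA := hpast.nonneg
  have hB0 : 0 ≤ B := (norm_nonneg _).trans (hB 0)
  have hB'0 : 0 ≤ B' := (norm_nonneg _).trans (hB' 0)
  have hfourier (n : Fin d → ℤ) (hn : ‖n‖ ≤ D) :=
    hvec.norm_integral_mul_mFourier_le_of_integral_eq_zero hS hC hr0.le hr1.le hF hpast η.2
      hmean hn p
  have hcost : (D : ℝ) ^ d * (C * (D : ℝ) ^ m * r ^ p) ^ (η : ℝ)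
      = C ^ (η : ℝ) * ((D : ℝ) ^ (d + m * η : ℝ) * (r ^ (η : ℝ)) ^ p) := by
    rw [Real.mul_rpow (by positivity) (by positivity), Real.mul_rpow hC (by positivity),
      Real.rpow_add (by positivity), Real.rpow_mul (by positivity), Real.rpow_natCast,
      Real.rpow_natCast, ← Real.rpow_pow_comm hr0.le]
    ring
  have hL1 : ∫ x, ‖F x‖ ≤ B :=
    (integral_mono (integrable_of_continuous_of_compactSpace hF.norm) (integrable_const B)
      hB).trans (by simp)
  refine (norm_integral_mul_comp_le_of_mFourier (integrable_of_continuous_of_compactSpace hF)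
    (continuous_torusAut (S ^ p)).measurable hη hη2 hG hB' hD hfourier).trans ?_
  rw [Fintype.card_fin]
  calc (D : ℝ) ^ d * (B' * (A * (C * (D : ℝ) ^ m * r ^ p) ^ (η : ℝ)))
        + H * (5 * d * (D : ℝ) ^ (-((η : ℝ) / 2))) * ∫ x, ‖F x‖
      = A * B' * C ^ (η : ℝ) * ((D : ℝ) ^ (d + m * η : ℝ) * (r ^ (η : ℝ)) ^ p)
        + H * (5 * d * (D : ℝ) ^ (-((η : ℝ) / 2))) * ∫ x, ‖F x‖ := by
        linear_combination A * B' * hcost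
    _ ≤ A * B' * C ^ (η : ℝ) * (2 ^ (d + m * η : ℝ) * ρ ^ p) + H * (5 * d * ρ ^ p) * B := by
        gcongr
    _ ≤ (C ^ (η : ℝ) * 2 ^ (d + m * η : ℝ) + 5 * d) * (A * B' + B * H) * ρ ^ p := by
        have h₁ : 0 ≤ A * B' * (5 * d) * ρ ^ p := by positivity
        have h₂ : 0 ≤ B * H * (C ^ (η : ℝ) * 2 ^ (d + m * η : ℝ)) * ρ ^ p := by positivity
        linarith

/-- Covariances of a function of the past with a Hölder function of the future decay
exponentially, uniformly over all such functions with given bounds. -/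
def HasDecorrelation (S : Matrix (Fin d) (Fin d) ℤ) (η : NNReal) (C ρ : ℝ) : Prop :=
  ∀ {F G : Torus d → ℂ} {A B : ℝ} {H : NNReal} (p : ℕ), Continuous F → HolderAlongPast S η A F →
    (∀ x, ‖F x‖ ≤ B) → HolderWith H η G → (∀ x, ‖G x‖ ≤ B) →
    ‖covC volume F fun x => G (torusAut (S ^ p) x)‖ ≤ C * B * (A + H) * ρ ^ p

lemma covC_eq_integral_sub_mul {Ω : Type*} [MeasurableSpace Ω] {μ : Measure Ω} {U V : Ω → ℂ}
    (hUV : Integrable (fun ω => U ω * V ω) μ) (hV : Integrable V μ) :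
    covC μ U V = ∫ ω, (U ω - ∫ ω', U ω' ∂μ) * V ω ∂μ := by
  simp_rw [covC, sub_mul]
  rw [integral_sub hUV (hV.const_mul _), integral_const_mul]

lemma NoRootOfUnityEigenvalue.exists_hasDecorrelation (hEig : NoRootOfUnityEigenvalue S)
    (hS : IsUnit S.det) {η : NNReal} (hη : 0 < η) (hη2 : η ≤ 2) :
    ∃ C ρ : ℝ, 0 ≤ C ∧ 0 < ρ ∧ ρ < 1 ∧ HasDecorrelation S η C ρ := by
  obtain ⟨C₀, m, r, hC₀, hr0, hr1, hvec⟩ := hEig.exists_hasContractedVectors hS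
  obtain ⟨C, ρ, hC, hρ0, hρ1, hdecay⟩ :=
    hvec.exists_decay_of_integral_eq_zero hS hC₀ hr0 hr1 hη hη2
  refine ⟨2 * C, ρ, by positivity, hρ0, hρ1, fun {F G A B H} p hF hpast hB hG hB' => ?_⟩
  have hGc := hG.continuous hη
  have hA := hpast.nonneg
  have hB0 : 0 ≤ B := (norm_nonneg _).trans (hB 0)
  have hmean : ‖∫ x, F x‖ ≤ B := by
    simpa using norm_integral_le_of_norm_le_const (μ := (volume : Measure (Torus d)))
      (Eventually.of_forall hB)
  have hcentered : ∫ x, (F x - ∫ y, F y) = 0 := by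
    rw [integral_sub (integrable_of_continuous_of_compactSpace hF) (integrable_const _)]
    simp
  have hbound : ‖∫ x, (F x - ∫ y, F y) * G (torusAut (S ^ p) x)‖
      ≤ C * (A * B + (B + B) * H) * ρ ^ p :=
    hdecay p (hF.sub continuous_const) (hpast.sub_const _)
      (fun x => norm_sub_le_of_le (hB x) hmean) hcentered hG hB'
  rw [covC_eq_integral_sub_mul (integrable_of_continuous_of_compactSpace (by fun_prop))
    (integrable_of_continuous_of_compactSpace (by fun_prop))]
  refine hbound.trans ?_
  have : 0 ≤ C * B * A * ρ ^ p := by positivity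
  linarith

end Decorrelation

section Pairings

lemma sum_pow_le_of_injOn {θ : ℝ} (hθ0 : 0 ≤ θ) (hθ1 : θ < 1) {s : Finset ℕ} {g : ℕ → ℕ}
    (hg : Set.InjOn g s) : ∑ l ∈ s, θ ^ g l ≤ (1 - θ)⁻¹ := by
  rw [← Finset.sum_image (f := fun n => θ ^ n) hg, ← tsum_geometric_of_lt_one hθ0 hθ1]
  exact (summable_geometric_of_lt_one hθ0 hθ1).sum_le_tsum _ fun _ _ => by positivity

lemma sum_pow_dist_le {θ : ℝ} (hθ0 : 0 ≤ θ) (hθ1 : θ < 1) (k : ℕ) (s : Finset ℕ) :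
    ∑ l ∈ s, θ ^ Nat.dist k l ≤ 2 * (1 - θ)⁻¹ := by
  rw [← Finset.sum_filter_add_sum_filter_not _ (fun l => l ≤ k), two_mul]
  refine add_le_add (sum_pow_le_of_injOn hθ0 hθ1 ?_) (sum_pow_le_of_injOn hθ0 hθ1 ?_) <;>
  · intro a ha b hb hab
    simp only [Finset.coe_filter, Set.mem_ofPred_eq] at ha hb
    simp only [Nat.dist] at hab
    lia

variable {ι R : Type*}

/-- The sum, over the three pairings of four indices, of the product of the weights `κ` of the two
pairs. -/
def pairingSum [Mul R] [Add R] (κ : ι → ι → R) (a b c e : ι) : R :=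
  κ a b * κ c e + κ a c * κ b e + κ a e * κ b c

lemma sum_pairingSum [CommSemiring R] (κ : ι → ι → R) (s : Finset ι) :
    ∑ a ∈ s, ∑ b ∈ s, ∑ c ∈ s, ∑ e ∈ s, pairingSum κ a b c e
      = 3 * (∑ a ∈ s, ∑ b ∈ s, κ a b) ^ 2 := by
  have hac : ∑ a ∈ s, ∑ b ∈ s, ∑ c ∈ s, ∑ e ∈ s, κ a c * κ b e
      = ∑ a ∈ s, ∑ c ∈ s, κ a c * ∑ b ∈ s, ∑ e ∈ s, κ b e :=
    Finset.sum_congr rfl fun a _ => by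
      rw [Finset.sum_comm]
      simp only [Finset.mul_sum]
  have hae : ∑ a ∈ s, ∑ b ∈ s, ∑ c ∈ s, ∑ e ∈ s, κ a e * κ b c
      = ∑ a ∈ s, ∑ e ∈ s, κ a e * ∑ b ∈ s, ∑ c ∈ s, κ b c :=
    Finset.sum_congr rfl fun a _ => by
      simp only [← Finset.mul_sum, ← Finset.sum_mul]
  simp only [pairingSum, Finset.sum_add_distrib, hac, hae]
  simp only [← Finset.mul_sum, ← Finset.sum_mul]
  ring

lemma forall_of_sorted_of_swap [LinearOrder ι] {P : ι → ι → ι → ι → Prop}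
    (h12 : ∀ a b c e, P a b c e → P b a c e) (h23 : ∀ a b c e, P a b c e → P a c b e)
    (h34 : ∀ a b c e, P a b c e → P a b e c)
    (hsorted : ∀ a b c e, a ≤ b → b ≤ c → c ≤ e → P a b c e) (a b c e : ι) : P a b c e := by
  have hthree (a b c e) (hab : a ≤ b) (hbc : b ≤ c) : P a b c e := by
    rcases le_total c e with hce | hec
    · exact hsorted a b c e hab hbc hce
    refine h34 _ _ _ _ ?_
    rcases le_total b e with hbe | heb
    · exact hsorted a b e c hab hbe hec
    refine h23 _ _ _ _ ?_
    rcases le_total a e with hae | hea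
    · exact hsorted a e b c hae heb hbc
    · exact h12 _ _ _ _ (hsorted e a b c hea hab hbc)
  have htwo (a b c e) (hab : a ≤ b) : P a b c e := by
    rcases le_total b c with hbc | hcb
    · exact hthree a b c e hab hbc
    refine h23 _ _ _ _ ?_
    rcases le_total a c with hac | hca
    · exact hthree a c b e hac hcb
    · exact h12 _ _ _ _ (hthree c a b e hca hab)
  rcases le_total a b with hab | hba
  · exact htwo a b c e hab
  · exact h12 _ _ _ _ (htwo b a c e hba)

lemma le_mul_pairingSum_of_sorted [LinearOrder ι] {Q : ι → ι → ι → ι → ℝ} {κ : ι → ι → ℝ} {C : ℝ}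
    (hC : 0 ≤ C) (hκ0 : ∀ a b, 0 ≤ κ a b) (hκ : ∀ a b, κ a b = κ b a)
    (h12 : ∀ a b c e, Q b a c e = Q a b c e) (h23 : ∀ a b c e, Q a c b e = Q a b c e)
    (h34 : ∀ a b c e, Q a b e c = Q a b c e)
    (hsorted : ∀ a b c e, a ≤ b → b ≤ c → c ≤ e → Q a b c e ≤ C * (κ a b * κ c e))
    (a b c e : ι) : Q a b c e ≤ C * pairingSum κ a b c e := by
  refine forall_of_sorted_of_swap (P := fun a b c e => Q a b c e ≤ C * pairingSum κ a b c e)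
    ?_ ?_ ?_ ?_ a b c e
  · intro a b c e h
    rw [h12]
    exact h.trans_eq (by rw [pairingSum, pairingSum, hκ b a]; ring)
  · intro a b c e h
    rw [h23]
    exact h.trans_eq (by rw [pairingSum, pairingSum, hκ c b]; ring)
  · intro a b c e h
    rw [h34]
    exact h.trans_eq (by rw [pairingSum, pairingSum, hκ e c]; ring)
  · intro a b c e hab hbc hce
    refine (hsorted a b c e hab hbc hce).trans (mul_le_mul_of_nonneg_left ?_ hC)
    rw [pairingSum, add_assoc]
    exact le_add_of_nonneg_right (add_nonneg (mul_nonneg (hκ0 _ _) (hκ0 _ _))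
      (mul_nonneg (hκ0 _ _) (hκ0 _ _)))

lemma sum_le_of_le_pow_gaps {Q : ℕ → ℕ → ℕ → ℕ → ℝ} {C θ : ℝ} (hC : 0 ≤ C) (hθ0 : 0 ≤ θ)
    (hθ1 : θ < 1) (h12 : ∀ a b c e, Q b a c e = Q a b c e)
    (h23 : ∀ a b c e, Q a c b e = Q a b c e) (h34 : ∀ a b c e, Q a b e c = Q a b c e)
    (hsorted : ∀ a b c e, a ≤ b → b ≤ c → c ≤ e →
      Q a b c e ≤ C * (θ ^ (b - a) * θ ^ (e - c))) (s : Finset ℕ) :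
    ∑ a ∈ s, ∑ b ∈ s, ∑ c ∈ s, ∑ e ∈ s, Q a b c e
      ≤ C * (3 * (2 * (1 - θ)⁻¹) ^ 2) * (s.card : ℝ) ^ 2 := by
  set κ : ℕ → ℕ → ℝ := fun a b => θ ^ Nat.dist a b
  have hle := le_mul_pairingSum_of_sorted (κ := κ) hC (fun a b => by positivity)
    (fun a b => by simp only [κ, Nat.dist_comm]) h12 h23 h34 fun a b c e hab hbc hce => by
      simpa only [κ, Nat.dist_eq_sub_of_le hab, Nat.dist_eq_sub_of_le hce]
        using hsorted a b c e hab hbc hce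
  have hrow : ∑ a ∈ s, ∑ b ∈ s, κ a b ≤ s.card * (2 * (1 - θ)⁻¹) := by
    rw [← nsmul_eq_mul]
    exact Finset.sum_le_card_nsmul _ _ _ fun a _ => sum_pow_dist_le hθ0 hθ1 a s
  calc ∑ a ∈ s, ∑ b ∈ s, ∑ c ∈ s, ∑ e ∈ s, Q a b c e
      ≤ ∑ a ∈ s, ∑ b ∈ s, ∑ c ∈ s, ∑ e ∈ s, C * pairingSum κ a b c e := by
        gcongr
        exact hle _ _ _ _
    _ = C * (3 * (∑ a ∈ s, ∑ b ∈ s, κ a b) ^ 2) := by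
        simp only [← Finset.mul_sum, sum_pairingSum]
    _ ≤ C * (3 * (s.card * (2 * (1 - θ)⁻¹)) ^ 2) := by gcongr
    _ = C * (3 * (2 * (1 - θ)⁻¹) ^ 2) * (s.card : ℝ) ^ 2 := by ring

end Pairings

section Conditions

variable {Ω : Type*} [MeasurableSpace Ω] {μ : Measure Ω}

lemma cond4_of_exponential_bounds {ξ : ℤ → Ω → ℝ} {C ρ : ℝ} (hC : 0 ≤ C) (hρ0 : 0 ≤ ρ)
    (hρ1 : ρ < 1) (htwo : ∀ p : ℕ, |∫ ω, ξ 0 ω * ξ p ω ∂μ| ≤ C * ρ ^ p)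
    (hpast : ∀ (i j k : ℤ) (p : ℕ), i ≤ k → j ≤ k →
      |∫ ω, ξ i ω * ξ j ω * ξ k ω * ξ (k + p) ω ∂μ| ≤ C * ρ ^ p)
    (hfuture : ∀ (i j k : ℤ) (p : ℕ), k ≤ i → k ≤ j →
      |∫ ω, ξ i ω * ξ j ω * ξ k ω * ξ (k - p) ω ∂μ| ≤ C * ρ ^ p) : Cond4 μ ξ := by
  constructor
  · have hsummable : Summable fun p : ℕ => C * (ρ ^ p + (p : ℝ) ^ 1 * ρ ^ p) :=
      ((summable_geometric_of_lt_one hρ0 hρ1).add (summable_pow_mul_geometric_of_norm_lt_one 1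
        (by rwa [Real.norm_of_nonneg hρ0]))).mul_left C
    refine hsummable.of_nonneg_of_le (fun p => by positivity) fun p => ?_
    have hsqrt : Real.sqrt (1 + (p : ℝ)) ≤ 1 + p := Real.sqrt_le_iff.2 ⟨by positivity, by
      nlinarith [(Nat.cast_nonneg p : (0 : ℝ) ≤ p)]⟩
    calc Real.sqrt (1 + (p : ℝ)) * |∫ ω, ξ 0 ω * ξ p ω ∂μ| ≤ (1 + p) * (C * ρ ^ p) :=
          mul_le_mul hsqrt (htwo p) (abs_nonneg _) (by positivity)
      _ = C * (ρ ^ p + (p : ℝ) ^ 1 * ρ ^ p) := by ring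
  · set Q : ℕ → ℕ → ℕ → ℕ → ℝ := fun a b c e => |∫ ω, ξ a ω * ξ b ω * ξ c ω * ξ e ω ∂μ|
    have hgaps (a b c e : ℕ) (hab : a ≤ b) (hbc : b ≤ c) (hce : c ≤ e) :
        Q a b c e ≤ C * (√ρ ^ (b - a) * √ρ ^ (e - c)) := by
      have hlast : Q a b c e ≤ C * ρ ^ (e - c) := by
        simpa only [Q, Nat.cast_sub hce, add_sub_cancel]
          using hpast a b c (e - c) (by lia) (by lia)
      have hfirst : Q a b c e ≤ C * ρ ^ (b - a) := by
        have h := hfuture e c b (b - a) (by lia) (by lia)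
        simp only [Nat.cast_sub hab, sub_sub_cancel] at h
        refine le_of_eq_of_le (congrArg abs (integral_congr_ae (.of_forall fun ω => ?_))) h
        ring
      -- The bound is the geometric mean of `hfirst` and `hlast`.
      refine le_of_sq_le_sq ?_ (by positivity)
      calc Q a b c e ^ 2 = Q a b c e * Q a b c e := sq _
        _ ≤ (C * ρ ^ (b - a)) * (C * ρ ^ (e - c)) :=
            mul_le_mul hfirst hlast (abs_nonneg _) (by positivity)
        _ = (C * (√ρ ^ (b - a) * √ρ ^ (e - c))) ^ 2 := by
            simp only [mul_pow, ← pow_mul, mul_comm _ 2]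
            simp only [pow_mul, Real.sq_sqrt hρ0]
            ring
    refine ⟨_, fun N _ => (sum_le_of_le_pow_gaps (Q := Q) hC (Real.sqrt_nonneg ρ)
      (Real.sqrt_lt' one_pos |>.2 (by simpa using hρ1)) ?_ ?_ ?_ hgaps
      (Finset.range N)).trans_eq (by rw [Finset.card_range])⟩ <;>
    · intro a b c e
      refine congrArg abs (integral_congr_ae (.of_forall fun ω => ?_))
      ring

lemma cond5_of_cond5Bound {ξ : ℤ → Ω → ℝ} {C Λ ρ : ℝ} (hC : 0 < C) (hΛ : 0 < Λ) (hρ0 : 0 ≤ ρ)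
    (hρ1 : ρ < 1) (hbound : Cond5Bound μ ξ C fun p s => Λ ^ s * ρ ^ p) : Cond5 μ ξ := by
  obtain ⟨r, hr⟩ := exists_pow_lt_of_lt_one (inv_pos.2 hΛ) hρ1
  have hrate : Λ * ρ ^ (r + 1) < 1 :=
    calc Λ * ρ ^ (r + 1) ≤ Λ * ρ ^ r := by
          gcongr ?_ * ?_
          exact pow_le_pow_of_le_one hρ0 hρ1.le r.le_succ
      _ < Λ * Λ⁻¹ := by gcongr
      _ = 1 := mul_inv_cancel₀ hΛ.ne'
  refine ⟨C, hC, fun p s => Λ ^ s * ρ ^ p, r + 1, r.succ_pos, fun p s => by positivity,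
    fun p s => ?_, ?_, hbound⟩
  · exact mul_le_mul_of_nonneg_left (pow_le_pow_of_le_one hρ0 hρ1.le p.le_succ) (by positivity)
  · refine squeeze_zero (fun s => by positivity) (fun s => ?_)
      (tendsto_self_mul_const_pow_of_lt_one (by positivity) hrate)
    simp only [pow_mul, ← mul_pow]
    gcongr
    exact Real.sqrt_le_iff.2 ⟨by positivity, mod_cast Nat.le_self_pow two_ne_zero s⟩

lemma covC_comp_of_measurePreserving {Ω' : Type*} [MeasurableSpace Ω'] {μ' : Measure Ω'}
    {T : Ω → Ω'} (hT : MeasurePreserving T μ μ') {U V : Ω' → ℂ}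
    (hU : AEStronglyMeasurable U μ') (hV : AEStronglyMeasurable V μ') :
    covC μ (fun ω => U (T ω)) (fun ω => V (T ω)) = covC μ' U V := by
  simp only [covC, ← hT.map_eq] at hU hV ⊢
  rw [integral_map hT.aemeasurable hU, integral_map hT.aemeasurable hV,
    integral_map (f := fun ω => U ω * V ω) hT.aemeasurable (hU.mul hV)]

lemma isStationarySeq_of_measurePreserving {ξ : ℤ → Ω → ℝ} (hξ : ∀ k, Measurable (ξ k))
    {T : ℤ → Ω → Ω} (hT : ∀ j, MeasurePreserving (T j) μ μ)
    (hshift : ∀ k j ω, ξ (k + j) ω = ξ k (T j ω)) : IsStationarySeq μ ξ := fun j q k => by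
  conv_rhs => rw [← (hT j).map_eq]
  rw [Measure.map_map (measurable_pi_lambda _ fun i => hξ (k i)) (hT j).measurable]
  simp only [hshift, Function.comp_def]

end Conditions

section TorusSequence

lemma holderWith_of_dist_le {X Y : Type*} [PseudoMetricSpace X] [PseudoMetricSpace Y]
    {f : X → Y} {C r : NNReal} (h : ∀ x y, dist (f x) (f y) ≤ C * dist x y ^ (r : ℝ)) :
    HolderWith C r f := fun x y => by
  rw [edist_nndist, edist_nndist, ← ENNReal.coe_rpow_of_nonneg _ r.coe_nonneg]
  exact mod_cast h x y

lemma holderWith_sum {X E ι : Type*} [PseudoMetricSpace X] [SeminormedAddCommGroup E]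
    {r : NNReal} {s : Finset ι} {C : ι → NNReal} {f : ι → X → E}
    (hf : ∀ k ∈ s, HolderWith (C k) r (f k)) :
    HolderWith (∑ k ∈ s, C k) r fun x => ∑ k ∈ s, f k x :=
  holderWith_of_dist_le fun x y => by
    rw [NNReal.coe_sum, Finset.sum_mul]
    exact dist_sum_sum_le_of_le _ fun k hk => (hf k hk).dist_le x y

lemma holderWith_cexp_sum {X ι : Type*} [PseudoMetricSpace X] {K r : NNReal} {s : Finset ι}
    {g : ι → X → ℝ} (hg : ∀ k ∈ s, HolderWith K r (g k)) (β : ι → ℝ) :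
    HolderWith ((∑ k ∈ s, ‖β k‖₊) * K) r
      fun x => Complex.exp (Complex.I * ((∑ k ∈ s, β k * g k x : ℝ) : ℂ)) := by
  rw [Finset.sum_mul]
  simpa [Function.comp_def] using lipschitzWith_cexp_I_mul.holderWith.comp
    (holderWith_sum fun k hk => (lipschitzWith_smul (β k)).holderWith.comp (hg k hk))

lemma HolderAlongPast.cexp_sum {d : ℕ} {S : Matrix (Fin d) (Fin d) ℤ} {ι : Type*} {η A : ℝ}
    {s : Finset ι} {g : ι → Torus d → ℝ} (hg : ∀ k ∈ s, HolderAlongPast S η A (g k))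
    (α : ι → ℝ) : HolderAlongPast S η ((∑ k ∈ s, |α k|) * A)
      fun x => Complex.exp (Complex.I * ((∑ k ∈ s, α k * g k x : ℝ) : ℂ)) := by
  rw [Finset.sum_mul]
  simpa using (HolderAlongPast.sum fun k hk => (hg k hk).const_mul (α k)).lipschitz_comp
    lipschitzWith_cexp_I_mul

lemma holderWith_comp_iterate {X Y : Type*} [PseudoMetricSpace X] [PseudoMetricSpace Y]
    {f : X → Y} {H η Λ : NNReal} (hf : HolderWith H η f) (hη : η ≤ 1) {T : X → X}
    (hT : LipschitzWith Λ T) (hΛ : 1 ≤ Λ) (n : ℕ) : HolderWith (H * Λ ^ n) η (f ∘ T^[n]) := by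
  have h := hf.comp (hT.iterate n).holderWith
  rw [mul_one] at h
  refine h.mono (mul_le_mul_right ?_ H)
  simpa using NNReal.rpow_le_rpow_of_exponent_le (one_le_pow₀ hΛ) (mod_cast hη : (η : ℝ) ≤ 1)

variable {d : ℕ}

lemma torusDist_le_sqrt_mul_dist (x y : Torus d) : torusDist x y ≤ √d * dist x y := by
  rw [torusDist, ← Real.sqrt_sq dist_nonneg, ← Real.sqrt_mul (Nat.cast_nonneg d)]
  refine Real.sqrt_le_sqrt ((Finset.sum_le_card_nsmul _ _ (dist x y ^ 2) fun i _ => ?_).trans_eq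
    (by simp))
  rw [← dist_eq_norm]
  gcongr
  exact dist_le_pi_dist x y i

lemma IsHolder.memHolder {η : ℝ} (hη : 0 ≤ η) {f : Torus d → ℝ} (hf : IsHolder η f) :
    MemHolder η.toNNReal f := by
  obtain ⟨c, hc⟩ := hf
  refine ⟨(|c| * √d ^ η).toNNReal, holderWith_of_dist_le fun x y => ?_⟩
  rw [Real.coe_toNNReal _ (by positivity), Real.coe_toNNReal _ hη]
  calc dist (f x) (f y) ≤ c * torusDist x y ^ η := hc x y
    _ ≤ |c| * (√d * dist x y) ^ η := by
        gcongr
        · exact Real.rpow_nonneg (Real.sqrt_nonneg _) _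
        · exact le_abs_self c
        · exact Real.sqrt_nonneg _
        · exact torusDist_le_sqrt_mul_dist x y
    _ = |c| * √d ^ η * dist x y ^ η := by
        rw [Real.mul_rpow (by positivity) dist_nonneg, mul_assoc]

variable {S : Matrix (Fin d) (Fin d) ℤ}

lemma integral_comp_torusAut_zpow (hS : IsUnit S.det) (k : ℤ) {g : Torus d → ℝ}
    (hg : Continuous g) : ∫ x, g (torusAut (S ^ k) x) = ∫ x, g x := by
  have hT := measurePreserving_torusAut_zpow hS k
  rw [← integral_map hT.aemeasurable hg.aestronglyMeasurable, hT.map_eq]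

lemma cond3_comp_torusAut (hS : IsUnit S.det) {f : Torus d → ℝ} (hf : Continuous f)
    (hmean : ∫ x, f x = 0) : Cond3 volume fun (k : ℤ) x => f (torusAut (S ^ k) x) := by
  refine ⟨?_, fun k => (integral_comp_torusAut_zpow hS k hf).trans hmean,
    fun k => integrable_of_continuous_of_compactSpace (by fun_prop)⟩
  exact isStationarySeq_of_measurePreserving
    (fun k => (hf.comp (continuous_torusAut _)).measurable)
    (measurePreserving_torusAut_zpow hS) fun k j x => by rw [torusAut_zpow_add hS]

namespace HasDecorrelation

variable {η H : NNReal} {C C' ρ ρ' : ℝ} {f : Torus d → ℝ}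

lemma mono (h : HasDecorrelation S η C ρ) (hC : 0 ≤ C) (hCC' : C ≤ C') (hρ : 0 ≤ ρ)
    (hρρ' : ρ ≤ ρ') : HasDecorrelation S η C' ρ' :=
  fun {F G A B H} p hF hpast hB hG hB' => by
  have hB0 : 0 ≤ B := (norm_nonneg _).trans (hB 0)
  have hA := hpast.nonneg
  have hC' := hC.trans hCC'
  exact (h p hF hpast hB hG hB').trans (by gcongr)

lemma abs_integral_mul_le (h : HasDecorrelation S η C ρ) (hS : IsUnit S.det) (hη : 0 < η)
    {F : Torus d → ℝ} {A B : ℝ} (hF : Continuous F) (hpast : HolderAlongPast S η A F)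
    (hFB : ∀ x, |F x| ≤ B) (hf : HolderWith H η f) (hfB : ∀ x, |f x| ≤ B)
    (hmean : ∫ x, f x = 0) (p : ℕ) :
    |∫ x, F x * f (torusAut (S ^ p) x)| ≤ C * B * (A + H) * ρ ^ p := by
  have hmean_p : ∫ x, f (torusAut (S ^ p) x) = 0 := by
    simpa only [zpow_natCast, hmean] using integral_comp_torusAut_zpow hS p (hf.continuous hη)
  have hF' : HolderAlongPast S η A fun x => (F x : ℂ) := by
    simpa using hpast.lipschitz_comp Complex.isometry_ofReal.lipschitz
  have hf' : HolderWith H η fun x => (f x : ℂ) := by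
    simpa [Function.comp_def] using Complex.isometry_ofReal.lipschitz.holderWith.comp hf
  have hcov := h p (by fun_prop) hF' (by simpa using hFB) hf'
    (by simpa using hfB)
  simpa only [covC, ← Complex.ofReal_mul, integral_complex_ofReal, hmean_p, Complex.ofReal_zero,
    mul_zero, sub_zero, Complex.norm_real, Real.norm_eq_abs] using hcov

lemma abs_integral_four_mul_le (h : HasDecorrelation S η C ρ) (hS : IsUnit S.det) (hη : 0 < η)
    {b : ℝ} (hb : 1 ≤ b) (hf : HolderWith H η f) (hfb : ∀ x, |f x| ≤ b) (hmean : ∫ x, f x = 0)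
    {i j k : ℤ} (hik : i ≤ k) (hjk : j ≤ k) (p : ℕ) :
    |∫ x, f (torusAut (S ^ i) x) * f (torusAut (S ^ j) x) * f (torusAut (S ^ k) x) *
        f (torusAut (S ^ (k + p)) x)| ≤ C * b ^ 3 * (3 * b ^ 2 * H + H) * ρ ^ p := by
  have hfc := hf.continuous hη
  have hpast {l : ℤ} (hl : l ≤ 0) := holderAlongPast_comp_torusAut_zpow hf hl (S := S)
  have hfb2 (l m : ℤ) (x : Torus d) :
      |f (torusAut (S ^ l) x) * f (torusAut (S ^ m) x)| ≤ b * b := by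
    rw [abs_mul]
    exact mul_le_mul (hfb _) (hfb _) (abs_nonneg _) (by linarith)
  have hfb3 (x : Torus d) : |f (torusAut (S ^ (i - k)) x) * f (torusAut (S ^ (j - k)) x) *
      f (torusAut (S ^ (0 : ℤ)) x)| ≤ b ^ 3 := by
    rw [abs_mul, pow_succ, sq]
    exact mul_le_mul (hfb2 _ _ x) (hfb _) (abs_nonneg _) (by positivity)
  have hshift := integral_comp_torusAut_zpow hS k
    (g := fun x => f (torusAut (S ^ (i - k)) x) * f (torusAut (S ^ (j - k)) x) *
      f (torusAut (S ^ (0 : ℤ)) x) * f (torusAut (S ^ (p : ℤ)) x)) (by fun_prop)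
  simp only [← torusAut_zpow_add hS, sub_add_cancel, zero_add, add_comm (p : ℤ)] at hshift
  have hbound := h.abs_integral_mul_le hS hη (by fun_prop)
    (((hpast (sub_nonpos.2 hik)).mul (hpast (sub_nonpos.2 hjk)) (fun x => hfb _)
      (fun x => hfb _)).mul (hpast le_rfl) (hfb2 _ _) fun x => hfb _)
    hfb3 hf (fun x => (hfb x).trans (le_self_pow₀ hb three_ne_zero)) hmean p
  rw [hshift]
  simp only [zpow_natCast] at hbound ⊢
  exact hbound.trans_eq (by ring)

lemma cond4 (h : HasDecorrelation S η C ρ) (hinv : HasDecorrelation S⁻¹ η C ρ) (hC : 0 ≤ C)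
    (hρ0 : 0 ≤ ρ) (hρ1 : ρ < 1) (hS : IsUnit S.det) (hη : 0 < η) (hf : HolderWith H η f)
    (hmean : ∫ x, f x = 0) : Cond4 volume fun (k : ℤ) x => f (torusAut (S ^ k) x) := by
  obtain ⟨M, hM⟩ := isCompact_univ.exists_bound_of_continuousOn (hf.continuous hη).continuousOn
  obtain ⟨b, hb, hfb⟩ : ∃ b : ℝ, 1 ≤ b ∧ ∀ x, |f x| ≤ b :=
    ⟨max M 1, le_max_right _ _, fun x => (hM x (Set.mem_univ x)).trans (le_max_left _ _)⟩
  refine cond4_of_exponential_bounds (C := C * b ^ 3 * (3 * b ^ 2 * H + H)) (ρ := ρ)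
    (by positivity) hρ0 hρ1 (fun p => ?_)
    (fun i j k p hik hjk => h.abs_integral_four_mul_le hS hη hb hf hfb hmean hik hjk p)
    (fun i j k p hki hkj => ?_)
  · have hpast : HolderAlongPast S η H f := by
      simpa [torusAut_one] using holderAlongPast_comp_torusAut_zpow hf (le_refl (0 : ℤ)) (S := S)
    have htwo := h.abs_integral_mul_le hS hη (hf.continuous hη) hpast hfb hf hfb hmean p
    have hb3 : b ≤ b ^ 3 := le_self_pow₀ hb three_ne_zero
    have hb2 : 1 ≤ 3 * b ^ 2 := by nlinarith
    simp only [zpow_zero, torusAut_one, zpow_natCast]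
    calc |∫ x, f x * f (torusAut (S ^ p) x)| ≤ C * b * (1 * H + H) * ρ ^ p := by rwa [one_mul]
      _ ≤ C * b ^ 3 * (3 * b ^ 2 * H + H) * ρ ^ p := by gcongr
  · have hbound := hinv.abs_integral_four_mul_le (Matrix.isUnit_nonsing_inv_det S hS) hη hb hf hfb
      hmean (neg_le_neg hki) (neg_le_neg hkj) p
    simpa only [Matrix.inv_zpow' hS, neg_add, neg_neg, ← sub_eq_add_neg] using hbound

lemma cond5Bound (h : HasDecorrelation S η C ρ) (hC : 0 ≤ C) (hρ : 0 ≤ ρ) (hS : IsUnit S.det)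
    (hη : 0 < η) (hη1 : η ≤ 1) (hf : HolderWith H η f) {Λ : NNReal} (hΛ : 1 ≤ Λ)
    (hT : LipschitzWith Λ (torusAut S)) :
    Cond5Bound volume (fun (k : ℤ) x => f (torusAut (S ^ k) x)) (C * H + 1)
      fun p s => Λ ^ s * ρ ^ p := by
  intro n₁ n₂ n₃ n₄ _ h₂₃ _ α β
  have hfc := hf.continuous hη
  set F : Torus d → ℂ := fun x => Complex.exp (Complex.I *
    ((∑ k ∈ Finset.Icc n₁ n₂, α k * f (torusAut (S ^ ((k : ℤ) - n₂)) x) : ℝ) : ℂ))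
  set G : Torus d → ℂ := fun x => Complex.exp (Complex.I *
    ((∑ k ∈ Finset.Icc n₃ n₄, β k * f (torusAut (S ^ ((k : ℤ) - n₃)) x) : ℝ) : ℂ))
  have hF : HolderAlongPast S η ((∑ k ∈ Finset.Icc n₁ n₂, |α k|) * H) F :=
    HolderAlongPast.cexp_sum (fun k hk => holderAlongPast_comp_torusAut_zpow hf
      (sub_nonpos.2 (mod_cast (Finset.mem_Icc.1 hk).2))) α
  have hG : HolderWith ((∑ k ∈ Finset.Icc n₃ n₄, ‖β k‖₊) * (H * Λ ^ (n₄ - n₃))) η G := by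
    refine holderWith_cexp_sum (fun k hk => ?_) β
    obtain ⟨hk₃, hk₄⟩ := Finset.mem_Icc.1 hk
    rw [← Nat.cast_sub hk₃, zpow_natCast, ← torusAut_iterate]
    exact (holderWith_comp_iterate hf hη1 hT hΛ (k - n₃)).mono
      (mul_le_mul_right (pow_le_pow_right₀ hΛ (Nat.sub_le_sub_right hk₄ _)) H)
  have hshift := covC_comp_of_measurePreserving (measurePreserving_torusAut_zpow hS n₂)
    (U := F) (V := fun x => G (torusAut (S ^ ((n₃ : ℤ) - n₂)) x)) (by fun_prop) (by fun_prop)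
  simp only [F, G, ← torusAut_zpow_add hS, sub_add_sub_cancel, sub_add_cancel] at hshift
  have hcov := h (n₃ - n₂) (by fun_prop) hF (fun x => (Complex.norm_exp_I_mul_ofReal _).le) hG
    fun x => (Complex.norm_exp_I_mul_ofReal _).le
  simp only [← zpow_natCast S, Nat.cast_sub h₂₃, F, G, ← torusAut_zpow_add hS,
    sub_add_sub_cancel] at hcov
  rw [hshift]
  refine hcov.trans ?_
  simp only [NNReal.coe_mul, NNReal.coe_sum, NNReal.coe_pow, coe_nnnorm, Real.norm_eq_abs]
  set a := ∑ k ∈ Finset.Icc n₁ n₂, |α k|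
  set b := ∑ k ∈ Finset.Icc n₃ n₄, |β k|
  have : 0 ≤ a := Finset.sum_nonneg fun _ _ => abs_nonneg _
  have : 0 ≤ b := Finset.sum_nonneg fun _ _ => abs_nonneg _
  have haH : a * H ≤ a * H * (Λ : ℝ) ^ (n₄ - n₃) :=
    le_mul_of_one_le_right (by positivity) (one_le_pow₀ (mod_cast hΛ))
  calc C * 1 * (a * H + b * (H * (Λ : ℝ) ^ (n₄ - n₃))) * ρ ^ (n₃ - n₂)
      ≤ C * 1 * (a * H * (Λ : ℝ) ^ (n₄ - n₃) + b * (H * (Λ : ℝ) ^ (n₄ - n₃))) *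
          ρ ^ (n₃ - n₂) :=
        mul_le_mul_of_nonneg_right (mul_le_mul_of_nonneg_left (by linarith) (by positivity))
          (by positivity)
    _ = C * H * (a + b) * ((Λ : ℝ) ^ (n₄ - n₃) * ρ ^ (n₃ - n₂)) := by ring
    _ ≤ (C * H + 1) * (1 + a + b) * ((Λ : ℝ) ^ (n₄ - n₃) * ρ ^ (n₃ - n₂)) := by
        gcongr <;> linarith

end HasDecorrelation

lemma NoRootOfUnityEigenvalue.exists_hasDecorrelation_and_inv (hEig : NoRootOfUnityEigenvalue S)
    (hS : IsUnit S.det) {η : NNReal} (hη : 0 < η) (hη2 : η ≤ 2) :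
    ∃ C ρ : ℝ, 0 ≤ C ∧ 0 < ρ ∧ ρ < 1 ∧ HasDecorrelation S η C ρ ∧ HasDecorrelation S⁻¹ η C ρ := by
  obtain ⟨C, ρ, hC, hρ0, hρ1, h⟩ := hEig.exists_hasDecorrelation hS hη hη2
  obtain ⟨C', ρ', hC', hρ0', hρ1', hinv⟩ := (hEig.inv hS).exists_hasDecorrelation
    (Matrix.isUnit_nonsing_inv_det S hS) hη hη2
  exact ⟨max C C', max ρ ρ', le_max_of_le_left hC, lt_max_of_lt_left hρ0, max_lt hρ1 hρ1',
    h.mono hC (le_max_left _ _) hρ0.le (le_max_left _ _),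
    hinv.mono hC' (le_max_right _ _) hρ0'.le (le_max_right _ _)⟩

end TorusSequence

theorem statement14_general {d : ℕ} {S : Matrix (Fin d) (Fin d) ℤ} (hS : IsUnit S.det)
    (hEig : NoRootOfUnityEigenvalue S) {η : ℝ} (hη : 0 < η) {f : Torus d → ℝ}
    (hf : IsHolder η f) (hmean : ∫ x, f x = 0) :
    Cond3 volume (fun k x => f (Titer (torusAut S) (torusAut S⁻¹) k x)) ∧
      Cond4 volume (fun k x => f (Titer (torusAut S) (torusAut S⁻¹) k x)) ∧
      Cond5 volume (fun k x => f (Titer (torusAut S) (torusAut S⁻¹) k x)) := by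
  have hη' : 0 < min η.toNNReal 1 := lt_min (Real.toNNReal_pos.2 hη) one_pos
  have hη1 : min η.toNNReal 1 ≤ 1 := min_le_right _ _
  obtain ⟨H, hfH⟩ := (hf.memHolder hη.le).of_le (min_le_left η.toNNReal 1)
  obtain ⟨C, ρ, hC, hρ0, hρ1, hdec, hdec_inv⟩ :=
    hEig.exists_hasDecorrelation_and_inv hS hη' (hη1.trans one_le_two)
  obtain ⟨Λ, hΛ⟩ := exists_lipschitzWith_torusAut S
  have hbound := hdec.cond5Bound hC hρ0.le hS hη' hη1 hfH (le_max_right Λ 1)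
    (hΛ.weaken (le_max_left Λ 1))
  simp only [Titer_torusAut]
  exact ⟨cond3_comp_torusAut hS (hfH.continuous hη') hmean,
    hdec.cond4 hdec_inv hC hρ0.le hρ1 hS hη' hfH hmean,
    cond5_of_cond5Bound (by positivity) (by positivity) hρ0.le hρ1 hbound⟩

/-- For an ergodic algebraic automorphism `T` of the torus and a bounded
centered η-Hölder function `f`, the sequence `ξ_k = f ∘ T^k` satisfies conditions
(3), (4) and (5). -/
theorem statement14 (d : ℕ) (hd : 2 ≤ d) (S : Matrix (Fin d) (Fin d) ℤ) (hdet : S.det = 1)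
    (hEig : NoRootOfUnityEigenvalue S) (η : ℝ) (hη : 0 < η)
    (f : Torus d → ℝ) (hfmeas : Measurable f) (hfbdd : ∃ c : ℝ, ∀ x, |f x| ≤ c)
    (hfholder : IsHolder η f)
    (hcent : (∫ x, f x ∂(volume : Measure (Torus d))) = 0) :
    Cond3 (volume : Measure (Torus d))
        (fun (k : ℤ) (x : Torus d) => f (Titer (torusAut S) (torusAut S⁻¹) k x)) ∧
    Cond4 (volume : Measure (Torus d))
        (fun (k : ℤ) (x : Torus d) => f (Titer (torusAut S) (torusAut S⁻¹) k x)) ∧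
    Cond5 (volume : Measure (Torus d))
        (fun (k : ℤ) (x : Torus d) => f (Titer (torusAut S) (torusAut S⁻¹) k x)) :=
  statement14_general (by rw [hdet]; exact isUnit_one) hEig hη hfholder hcent
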